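/- Let φ : ℙ¹ → ℙ¹ be a rational map of degree d ≥ 2 defined over a number field K, with good reduction outside a finite set of places S of K containing all archimedean ones. If there exist at least four K-rational periodic points of φ, then |Tail(φ,K)| + |Per₀(φ,K)| ≤ 12·7^{4|S|}, where Tail(φ,K) is the set of K-rational tail points of φ and Per₀(φ,K) is the set of K-rational periodic points belonging to some critical cycle of φ. -/

import Mathlib

open NumberField IsDedekindDomain MvPolynomial
open scoped Classical nonZeroDivisors

set_option synthInstance.maxHeartbeats 1000000
set_option maxHeartbeats 1000000

noncomputable section

/-- The projective line over `K`. -/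
abbrev P1 (K : Type*) [Field K] := Projectivization K (Fin 2 → K)

variable {K : Type*} [Field K] [NumberField K]

/-- The additive `v`-adic valuation (order) of `x ∈ K`, with junk value `0` at `x = 0`,
normalized so that it is surjective onto `ℤ`. -/
def ordAt (v : HeightOneSpectrum (𝓞 K)) (x : K) : ℤ :=
  if hx : x = 0 then 0
  else - Multiplicative.toAdd (WithZero.unzero ((v.valuation K).ne_zero_iff.mpr hx))

/-- `min (v(x), v(y))` for a pair of coordinates, not both zero. -/
def minOrd (v : HeightOneSpectrum (𝓞 K)) (x y : K) : ℤ :=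
  if x = 0 then ordAt v y else if y = 0 then ordAt v x else min (ordAt v x) (ordAt v y)

/-- The `v`-adic logarithmic distance between two points of `ℙ¹(K)`:
`δ_v(P,Q) = v(x₁y₂ - x₂y₁) - min(v x₁, v y₁) - min(v x₂, v y₂)`, with value `⊤` when `P = Q`
(it is independent of the choice of homogeneous coordinates, so we compute it on the chosen
representatives). -/
def logDist (v : HeightOneSpectrum (𝓞 K)) (P Q : P1 K) : WithTop ℤ :=
  if P = Q then ⊤
  else ((ordAt v (P.rep 0 * Q.rep 1 - P.rep 1 * Q.rep 0)
        - minOrd v (P.rep 0) (P.rep 1) - minOrd v (Q.rep 0) (Q.rep 1) : ℤ) : WithTop ℤ)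

/-- An endomorphism of `ℙ¹` of degree `d` defined over `K`, given by a pair of homogeneous
forms of degree `d` with no common zero over the algebraic closure, together with the induced
self-map of `ℙ¹(K)`. -/
structure P1Map (K : Type*) [Field K] (d : ℕ) where
  toFun : P1 K → P1 K
  F : MvPolynomial (Fin 2) K
  G : MvPolynomial (Fin 2) K
  homF : F.IsHomogeneous d
  homG : G.IsHomogeneous d
  coprime : ∀ x y : AlgebraicClosure K,
    aeval ![x, y] F = 0 → aeval ![x, y] G = 0 → x = 0 ∧ y = 0
  compat : ∀ (x y : K) (hxy : ![x, y] ≠ 0)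
    (h : ![eval ![x, y] F, eval ![x, y] G] ≠ 0),
    toFun (Projectivization.mk K ![x, y] hxy) =
      Projectivization.mk K ![eval ![x, y] F, eval ![x, y] G] h

variable {d : ℕ}

/-- `φ` has good reduction at the finite place `v`: some representing pair of forms has
coefficients in the valuation ring at `v`, not all in the maximal ideal, and the reductions
of the two forms modulo `v` have no common zero in `ℙ¹` of the algebraic closure of the
residue field. -/
def GoodReductionAt (φ : P1Map K d) (v : HeightOneSpectrum (𝓞 K)) : Prop :=
  ∃ c : K, c ≠ 0 ∧
    ∃ F₀ G₀ : MvPolynomial (Fin 2) (v.valuation (K := K)).valuationSubring,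
      MvPolynomial.map ((v.valuation (K := K)).valuationSubring.subtype) F₀ = C c * φ.F ∧
      MvPolynomial.map ((v.valuation (K := K)).valuationSubring.subtype) G₀ = C c * φ.G ∧
      ((∃ m, F₀.coeff m ∉ IsLocalRing.maximalIdeal (v.valuation (K := K)).valuationSubring) ∨
        (∃ m, G₀.coeff m ∉ IsLocalRing.maximalIdeal (v.valuation (K := K)).valuationSubring)) ∧
      ∀ x y : AlgebraicClosure
          (IsLocalRing.ResidueField (v.valuation (K := K)).valuationSubring),
        eval ![x, y] (MvPolynomial.map
          ((algebraMap (IsLocalRing.ResidueField (v.valuation (K := K)).valuationSubring)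
              (AlgebraicClosure _)).comp
            (IsLocalRing.residue _)) F₀) = 0 →
        eval ![x, y] (MvPolynomial.map
          ((algebraMap (IsLocalRing.ResidueField (v.valuation (K := K)).valuationSubring)
              (AlgebraicClosure _)).comp
            (IsLocalRing.residue _)) G₀) = 0 →
        x = 0 ∧ y = 0

/-- `φ` has good reduction outside `S`, where `S` consists of all archimedean places together
with the finite places in `T`. -/
def GoodReductionOutside (φ : P1Map K d) (T : Finset (HeightOneSpectrum (𝓞 K))) : Prop :=
  ∀ v ∉ T, GoodReductionAt φ v

/-- `P` is a periodic point of `φ`. -/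
def IsPeriodicPoint (φ : P1Map K d) (P : P1 K) : Prop :=
  ∃ n, 0 < n ∧ φ.toFun^[n] P = P

/-- `P` is a preperiodic point of `φ`. -/
def IsPreperiodicPoint (φ : P1Map K d) (P : P1 K) : Prop :=
  ∃ m, IsPeriodicPoint φ (φ.toFun^[m] P)

/-- `P` is a tail point of `φ`: preperiodic but not periodic. -/
def IsTailPoint (φ : P1Map K d) (P : P1 K) : Prop :=
  IsPreperiodicPoint φ P ∧ ¬ IsPeriodicPoint φ P

/-- The set `Tail(φ,K,P)` of `K`-rational tail points of `P`: non-periodic points having `P`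
in their forward orbit. -/
def TailOf (φ : P1Map K d) (P : P1 K) : Set (P1 K) :=
  {Q | ¬ IsPeriodicPoint φ Q ∧ ∃ n, φ.toFun^[n] Q = P}

/-- `P = [a:b]` is a critical point of `φ = [F:G]`: the algebraic condition
`φ([x:y]) = φ([a:b])`, i.e. the form `G(a,b)·F(X,Y) - F(a,b)·G(X,Y)`, vanishes to order
at least `2` at `[a:b]`. -/
def IsCriticalPt (φ : P1Map K d) (P : P1 K) : Prop :=
  ∃ (a b : K) (hab : ![a, b] ≠ 0), P = Projectivization.mk K ![a, b] hab ∧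
    (C b * X 0 - C a * X 1) ^ 2 ∣
      (C (eval ![a, b] φ.G) * φ.F - C (eval ![a, b] φ.F) * φ.G)

/-- `P` belongs to a critical cycle of `φ`: it lies in the orbit of a critical periodic
point. -/
def InCriticalCycle (φ : P1Map K d) (P : P1 K) : Prop :=
  ∃ Q, IsCriticalPt φ Q ∧ IsPeriodicPoint φ Q ∧ ∃ n, φ.toFun^[n] Q = P

/-- The cardinality `|S|` of the set of places `S` consisting of all archimedean places
together with the finite places in `T`. -/
def sCard (K : Type*) [Field K] [NumberField K] (T : Finset (HeightOneSpectrum (𝓞 K))) : ℕ :=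
  T.card + Fintype.card (InfinitePlace K)

/-- `B(s) = 2^{16 s}`. -/
def Bconst (s : ℕ) : ℕ := 2 ^ (16 * s)

/-- `C(n,s) = e^{(6n)^{3n} (n s + 1 - n)}`. -/
def Cconst (n s : ℕ) : ℝ := Real.exp ((6 * n : ℝ) ^ (3 * n) * (n * s + 1 - n))

/-- `CV(d,s) = (3B(s)+13)d + 27B(s) + C(5,s) + 6C(3,s) + 32`. -/
def CVconst (d s : ℕ) : ℝ :=
  (3 * (Bconst s : ℝ) + 13) * d + 27 * (Bconst s : ℝ) + Cconst 5 s + 6 * Cconst 3 s + 32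

/-- `L₁(d,s) = (d-1)(1 + d(1 + B(s)))`. -/
def L1const (d s : ℕ) : ℕ := (d - 1) * (1 + d * (1 + Bconst s))

/-- `L₂(d,s) = max{(2(C(3,s)+2)+1)d + 1, (d-1)(1 + B(s)(B(s) + C(3,s) + 3))}`. -/
def L2const (d s : ℕ) : ℝ :=
  max ((2 * (Cconst 3 s + 2) + 1) * d + 1)
    (((d : ℝ) - 1) * (1 + (Bconst s : ℝ) * ((Bconst s : ℝ) + Cconst 3 s + 3)))

/-- `L₃(d,s) = ((1 + 3B(s))B(s) + 1)(d-1)`. -/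
def L3const (d s : ℕ) : ℕ := ((1 + 3 * Bconst s) * Bconst s + 1) * (d - 1)

/-- `L₄(d,s) = (C(3,s) + 3)(d-1)`. -/
def L4const (d s : ℕ) : ℝ := (Cconst 3 s + 3) * ((d : ℝ) - 1)

end

namespace SUnitBound

/-- A finite system of absolute values on `K` with a subring `O` of elements integral outside
the system, for which the product inequality holds. -/
structure PlaceSys (K : Type*) [Field K] (ι : Type*) [Fintype ι] where
  av : ι → AbsoluteValue K ℝ
  mu : ι → ℝ
  ar : ι → ℝ
  mu_pos : ∀ v, 0 < mu v
  ok : ∀ v, (ar v = 0 ∧ IsNonarchimedean (av v)) ∨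
    (ar v = mu v ∧ ∃ σ : K →+* ℂ, ∀ x, av v x = ‖σ x‖)
  O : Subring K
  prod : ∀ x ∈ O, x ≠ 0 → 0 ≤ ∑ v, mu v * Real.log (av v x)

namespace PlaceSys

variable {K : Type*} [Field K] {ι : Type*} [Fintype ι] (S : PlaceSys K ι)

lemma ar_nonneg (v : ι) : 0 ≤ S.ar v := by
  rcases S.ok v with h | h
  · rw [h.1]
  · rw [h.1]; exact (S.mu_pos v).le

/-- weighted logarithm -/
noncomputable def lg (v : ι) (x : K) : ℝ := S.mu v * Real.log (S.av v x)

/-- `x` is bounded by `exp (b / mu)` at `v`. -/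
def Le (v : ι) (x : K) (b : ℝ) : Prop := S.av v x ≤ Real.exp (b / S.mu v)

/-- total archimedean weight -/
noncomputable def D : ℝ := ∑ v, S.ar v

variable {S}

lemma Le.mono {v : ι} {x : K} {a b : ℝ} (h : S.Le v x a) (hab : a ≤ b) : S.Le v x b := by
  refine le_trans h (Real.exp_le_exp.2 ?_)
  have := S.mu_pos v
  gcongr

lemma Le.mul {v : ι} {x y : K} {a b : ℝ} (hx : S.Le v x a) (hy : S.Le v y b) :
    S.Le v (x * y) (a + b) := by
  unfold Le at *
  rw [map_mul, add_div, Real.exp_add]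
  exact mul_le_mul hx hy ((S.av v).nonneg _) (Real.exp_pos _).le

lemma Le.one (v : ι) : S.Le v 1 0 := by simp [Le]

lemma Le.pow {v : ι} {x : K} {a : ℝ} (hx : S.Le v x a) (k : ℕ) :
    S.Le v (x ^ k) (k * a) := by
  induction k with
  | zero => simpa using Le.one v
  | succ k ih =>
    rw [pow_succ]
    refine (ih.mul hx).mono (le_of_eq ?_)
    push_cast; ring

lemma Le.prod {α : Type*} (s : Finset α) {v : ι} {x : α → K} {a : α → ℝ}
    (hx : ∀ i ∈ s, S.Le v (x i) (a i)) : S.Le v (∏ i ∈ s, x i) (∑ i ∈ s, a i) := by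
  induction s using Finset.induction_on with
  | empty => simpa using Le.one v
  | insert i s hi ih =>
    rw [Finset.prod_insert hi, Finset.sum_insert hi]
    exact (hx i (Finset.mem_insert_self _ _)).mul
      (ih fun j hj => hx j (Finset.mem_insert_of_mem hj))

lemma le_lg {v : ι} {x : K} (hx : x ≠ 0) : S.Le v x (S.lg v x) := by
  unfold Le lg
  rw [mul_div_cancel_left₀ _ (S.mu_pos v).ne', Real.exp_log ((S.av v).pos hx)]

lemma Le.lg_le {v : ι} {x : K} {b : ℝ} (hx : x ≠ 0) (h : S.Le v x b) : S.lg v x ≤ b := by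
  unfold Le at h
  unfold lg
  have h1 : Real.log (S.av v x) ≤ b / S.mu v := by
    rw [Real.log_le_iff_le_exp ((S.av v).pos hx)]; exact h
  have := S.mu_pos v
  rw [le_div_iff₀ this] at h1
  linarith

lemma lg_mul {v : ι} {x y : K} (hx : x ≠ 0) (hy : y ≠ 0) :
    S.lg v (x * y) = S.lg v x + S.lg v y := by
  unfold lg
  rw [map_mul, Real.log_mul ((S.av v).pos hx).ne' ((S.av v).pos hy).ne']; ring

lemma lg_inv {v : ι} {x : K} : S.lg v (x⁻¹) = - S.lg v x := by
  unfold lg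
  rw [map_inv₀, Real.log_inv]; ring

lemma lg_pow {v : ι} {x : K} (n : ℕ) : S.lg v (x ^ n) = n * S.lg v x := by
  unfold lg
  rw [map_pow, Real.log_pow]; ring

lemma av_int_le (v : ι) (h : IsNonarchimedean (S.av v)) (c : ℤ) : S.av v (c : K) ≤ 1 :=
  IsNonarchimedean.apply_intCast_le_one h

lemma Le.sum {α : Type*} (s : Finset α) {v : ι} (c : α → ℤ) (t : α → K) {C b : ℝ}
    (hC : 1 ≤ C) (hc : ∑ i ∈ s, |(c i : ℝ)| ≤ C) (ht : ∀ i ∈ s, S.Le v (t i) b) :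
    S.Le v (∑ i ∈ s, (c i : K) * t i) (b + S.ar v * Real.log C) := by
  rcases S.ok v with ⟨h0, hna⟩ | ⟨h1, σ, hσ⟩
  · unfold Le
    rw [h0, zero_mul, add_zero]
    rcases s.eq_empty_or_nonempty with rfl | hs
    · simp [(Real.exp_pos _).le]
    · obtain ⟨i, hi, hle⟩ := hna.finset_image_add_of_nonempty (fun i => (c i : K) * t i) hs
      refine hle.trans ?_
      rw [map_mul]
      calc _ ≤ 1 * S.av v (t i) :=
            mul_le_mul_of_nonneg_right (av_int_le v hna _) ((S.av v).nonneg _)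
        _ ≤ _ := by rw [one_mul]; exact ht i hi
  · unfold Le
    rw [h1, add_div, mul_div_cancel_left₀ _ (S.mu_pos v).ne', Real.exp_add,
      Real.exp_log (by linarith)]
    calc S.av v (∑ i ∈ s, (c i : K) * t i) ≤ ∑ i ∈ s, S.av v ((c i : K) * t i) :=
          (S.av v).sum_le _ _
      _ ≤ ∑ i ∈ s, |(c i : ℝ)| * Real.exp (b / S.mu v) := by
          refine Finset.sum_le_sum fun i hi => ?_
          rw [map_mul]
          have : S.av v (c i : K) = |(c i : ℝ)| := by
            rw [hσ, map_intCast, Complex.norm_intCast]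
          rw [this]
          exact mul_le_mul_of_nonneg_left (ht i hi) (abs_nonneg _)
      _ = (∑ i ∈ s, |(c i : ℝ)|) * Real.exp (b / S.mu v) := by rw [Finset.sum_mul]
      _ ≤ _ := by
          rw [mul_comm]
          exact mul_le_mul_of_nonneg_left hc (Real.exp_pos _).le

/-- difference of two elements -/
lemma Le.sub {v : ι} {x y : K} {b : ℝ} (hx : S.Le v x b) (hy : S.Le v y b) :
    S.Le v (x - y) (b + S.ar v * Real.log 2) := by
  have := Le.sum (S := S) (v := v) (Finset.univ : Finset (Fin 2)) ![1, -1] ![x, y] (C := 2)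
    (b := b) (by norm_num) (by simp [Fin.sum_univ_two]; norm_num)
    (by intro i _; fin_cases i <;> simp [hx, hy])
  simpa [Fin.sum_univ_two, sub_eq_add_neg] using this

lemma Le.neg {v : ι} {x : K} {b : ℝ} (hx : S.Le v x b) : S.Le v (-x) b := by
  unfold Le at *; rwa [(S.av v).map_neg]

lemma sum_lg_nonneg {x : K} (hx : x ∈ S.O) (h0 : x ≠ 0) : 0 ≤ ∑ v, S.lg v x := S.prod x hx h0

lemma sum_lg_eq_zero {x : K} (hx : x ∈ S.O) (hx' : x⁻¹ ∈ S.O) (h0 : x ≠ 0) :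
    ∑ v, S.lg v x = 0 := by
  have h1 := sum_lg_nonneg hx h0
  have h2 := sum_lg_nonneg hx' (inv_ne_zero h0)
  simp only [lg_inv, Finset.sum_neg_distrib] at h2
  linarith

/-- `max (a, b, 0)` -/
noncomputable def mx (p : ℝ × ℝ) : ℝ := max (max p.1 p.2) 0

lemma mx_add (p q : ℝ × ℝ) : mx (p + q) ≤ mx p + mx q := by
  unfold mx
  simp only [Prod.fst_add, Prod.snd_add]
  refine max_le (max_le ?_ ?_) ?_
  · exact add_le_add (le_max_of_le_left (le_max_left _ _)) (le_max_of_le_left (le_max_left _ _))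
  · exact add_le_add (le_max_of_le_left (le_max_right _ _)) (le_max_of_le_left (le_max_right _ _))
  · exact add_nonneg (le_max_right _ _) (le_max_right _ _)

lemma mx_nonneg (p : ℝ × ℝ) : 0 ≤ mx p := le_max_right _ _
lemma fst_le_mx (p : ℝ × ℝ) : p.1 ≤ mx p := le_max_of_le_left (le_max_left _ _)
lemma snd_le_mx (p : ℝ × ℝ) : p.2 ≤ mx p := le_max_of_le_left (le_max_right _ _)

lemma mx_smul {c : ℝ} (hc : 0 ≤ c) (p : ℝ × ℝ) : mx (c • p) = c * mx p := by
  unfold mx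
  simp only [Prod.smul_fst, Prod.smul_snd, smul_eq_mul]
  rw [mul_max_of_nonneg _ _ hc, mul_max_of_nonneg _ _ hc, mul_zero]

lemma mx_neg (p : ℝ × ℝ) : mx (-p) ≤ 2 * mx p - p.1 - p.2 := by
  have h1 := mx_nonneg p
  have h2 := fst_le_mx p
  have h3 := snd_le_mx p
  conv_lhs => unfold mx
  simp only [Prod.fst_neg, Prod.snd_neg]
  refine max_le (max_le ?_ ?_) ?_ <;> linarith

/-- the height on logarithmic space -/
noncomputable def ht (ξ : ι → ℝ × ℝ) : ℝ := ∑ v, mx (ξ v)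

/-- the condition that both coordinate sums vanish -/
def Sz (ξ : ι → ℝ × ℝ) : Prop := ∑ v, ξ v = 0

lemma ht_nonneg (ξ : ι → ℝ × ℝ) : 0 ≤ ht ξ := Finset.sum_nonneg fun v _ => mx_nonneg _

lemma ht_add (ξ η : ι → ℝ × ℝ) : ht (ξ + η) ≤ ht ξ + ht η := by
  unfold ht
  rw [← Finset.sum_add_distrib]
  exact Finset.sum_le_sum fun v _ => mx_add _ _

lemma ht_smul {c : ℝ} (hc : 0 ≤ c) (ξ : ι → ℝ × ℝ) : ht (c • ξ) = c * ht ξ := by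
  unfold ht
  rw [Finset.mul_sum]
  exact Finset.sum_congr rfl fun v _ => mx_smul hc _

lemma Sz.fst {ξ : ι → ℝ × ℝ} (h : Sz ξ) : ∑ v, (ξ v).1 = 0 := by
  have := congrArg Prod.fst h
  simpa [Prod.fst_sum] using this

lemma Sz.snd {ξ : ι → ℝ × ℝ} (h : Sz ξ) : ∑ v, (ξ v).2 = 0 := by
  have := congrArg Prod.snd h
  simpa [Prod.snd_sum] using this

lemma ht_neg {ξ : ι → ℝ × ℝ} (h : Sz ξ) : ht (-ξ) ≤ 2 * ht ξ := by
  have : ht (-ξ) ≤ ∑ v, (2 * mx (ξ v) - (ξ v).1 - (ξ v).2) :=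
    Finset.sum_le_sum fun v _ => mx_neg _
  rw [Finset.sum_sub_distrib, Finset.sum_sub_distrib, h.fst, h.snd, ← Finset.mul_sum] at this
  unfold ht at *
  linarith

variable (S)
/-- log vector of a solution `x + (1 - x) = 1` -/
noncomputable def Lg (x : K) : ι → ℝ × ℝ := fun v => (S.lg v x, S.lg v (1 - x))

/-- `x` is a solution of the unit equation -/
structure Sol (x : K) : Prop where
  x0 : x ≠ 0
  y0 : 1 - x ≠ 0
  xO : x ∈ S.O
  xiO : x⁻¹ ∈ S.O
  yiO : (1 - x)⁻¹ ∈ S.O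

variable {S}

lemma Sol.yO {x : K} (h : S.Sol x) : 1 - x ∈ S.O := S.O.sub_mem S.O.one_mem h.xO

lemma Sol.sz {x : K} (h : S.Sol x) : Sz (S.Lg x) := by
  unfold Sz Lg
  ext
  · simpa [Prod.fst_sum] using sum_lg_eq_zero h.xO h.xiO h.x0
  · simpa [Prod.snd_sum] using sum_lg_eq_zero h.yO h.yiO h.y0

end PlaceSys
end SUnitBound

namespace SUnitBound
namespace PlaceSys

variable {K : Type*} [Field K] {ι : Type*} [Fintype ι] {S : PlaceSys K ι}

lemma tiny_poly {A B C : ℝ} (hB : 0 ≤ B) (hAB : B ≤ A) (hAC : A ≤ C) :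
    27 * (A * B * C) * (A ^ 2 + B ^ 2 + C ^ 2 - A * B - B * C - C * A) ≤ 4 * C ^ 5 := by
  have hA : 0 ≤ A := hB.trans hAB
  have hC : 0 ≤ C := hA.trans hAC
  have h1 : A ^ 2 + B ^ 2 + C ^ 2 - A * B - B * C - C * A ≤ (C - B) ^ 2 := by
    nlinarith [mul_nonneg (sub_nonneg.2 hAB) (sub_nonneg.2 hAC)]
  have h0 : 0 ≤ (C - B) ^ 2 := sq_nonneg _
  have h2 : 27 * (B * (C - B) ^ 2) ≤ 4 * C ^ 3 := by
    have : 4 * C ^ 3 - 27 * (B * (C - B) ^ 2) = (C - 3 * B) ^ 2 * (4 * C - 3 * B) := by ring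
    have h3 : 0 ≤ (C - 3 * B) ^ 2 * (4 * C - 3 * B) :=
      mul_nonneg (sq_nonneg _) (by linarith)
    linarith
  calc _ ≤ 27 * (A * B * C) * (C - B) ^ 2 :=
        mul_le_mul_of_nonneg_left h1 (by positivity)
    _ = A * C * (27 * (B * (C - B) ^ 2)) := by ring
    _ ≤ C * C * (4 * C ^ 3) := by
        apply mul_le_mul _ h2 (by positivity) (by positivity)
        exact mul_le_mul_of_nonneg_right hAC hC
    _ = 4 * C ^ 5 := by ring

lemma tiny_poly' {A B C m : ℝ} (hA : 0 ≤ A) (hB : 0 ≤ B) (hC : 0 ≤ C) (hAm : A ≤ m) (hBm : B ≤ m)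
    (hCm : C ≤ m) :
    27 * (A * B * C) * (A ^ 2 + B ^ 2 + C ^ 2 - A * B - B * C - C * A) ≤ 4 * m ^ 5 := by
  have key : ∃ M, 0 ≤ M ∧ M ≤ m ∧
      27 * (A * B * C) * (A ^ 2 + B ^ 2 + C ^ 2 - A * B - B * C - C * A) ≤ 4 * M ^ 5 := by
    rcases le_total A B with h1 | h1 <;> rcases le_total B C with h2 | h2 <;>
      rcases le_total A C with h3 | h3
    · exact ⟨C, hC, hCm, by have := tiny_poly hA h1 h2; nlinarith [this]⟩
    · exact ⟨C, hC, hCm, by have := tiny_poly hA h1 h2; nlinarith [this]⟩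
    · exact ⟨B, hB, hBm, by have := tiny_poly hA h3 h2; nlinarith [this]⟩
    · exact ⟨B, hB, hBm, by have := tiny_poly hC h3 h1; nlinarith [this]⟩
    · exact ⟨C, hC, hCm, by have := tiny_poly hB h1 h3; nlinarith [this]⟩
    · exact ⟨A, hA, hAm, by have := tiny_poly hB h2 h3; nlinarith [this]⟩
    · exact ⟨C, hC, hCm, by have := tiny_poly hB h1 h3; nlinarith [this]⟩
    · exact ⟨A, hA, hAm, by have := tiny_poly hC h2 h1; nlinarith [this]⟩
  obtain ⟨M, h0, hM, h⟩ := key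
  exact h.trans (by gcongr)

lemma normSq_quad (z : ℂ) : Complex.normSq (z ^ 2 - z + 1) =
    (Complex.normSq z) ^ 2 + (Complex.normSq (1 - z)) ^ 2 + 1 ^ 2
      - Complex.normSq z * Complex.normSq (1 - z) - Complex.normSq (1 - z) * 1
      - 1 * Complex.normSq z := by
  simp only [Complex.normSq_apply, pow_two, Complex.add_re, Complex.sub_re, Complex.mul_re,
    Complex.one_re, Complex.add_im, Complex.sub_im, Complex.mul_im, Complex.one_im]
  ring

lemma lg_tiny {x : K} (hx : x ≠ 0) (hy : 1 - x ≠ 0) (he : x ^ 2 - x + 1 ≠ 0) (v : ι) :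
    S.ar v * Real.log (27 / 4) + 2 * (S.lg v x + S.lg v (1 - x) + S.lg v (x ^ 2 - x + 1)) ≤
      10 * mx (S.Lg x v) := by
  have h0 := mx_nonneg (S.Lg x v)
  have h1 : S.lg v x ≤ mx (S.Lg x v) := fst_le_mx (S.Lg x v)
  have h2 : S.lg v (1 - x) ≤ mx (S.Lg x v) := snd_le_mx (S.Lg x v)
  set M := mx (S.Lg x v) with hM
  have hmu := S.mu_pos v
  rcases S.ok v with ⟨ha, hna⟩ | ⟨ha, σ, hσ⟩
  · have hx2 : S.Le v (x ^ 2) (2 * M) := by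
      simpa using ((le_lg hx).mono h1).pow 2
    have hx1 : S.Le v (x) (2 * M) := (le_lg hx).mono (by linarith)
    have hone : S.Le v (1 : K) (2 * M) := (Le.one v).mono (by linarith)
    have := Le.sum (S := S) (v := v) (Finset.univ : Finset (Fin 3)) ![1, -1, 1] ![x ^ 2, x, 1]
      (C := 3) (b := 2 * M) (by norm_num) (by simp [Fin.sum_univ_three]; norm_num)
      (by intro i _; fin_cases i <;> simp [hx2, hx1, hone])
    rw [ha] at this ⊢
    have h3 : S.Le v (x ^ 2 - x + 1) (2 * M) := by
      simpa [Fin.sum_univ_three, sub_eq_add_neg] using this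
    have := h3.lg_le he
    linarith
  · rw [ha]
    have hle : ∀ z : K, z ≠ 0 → S.lg v z ≤ M → ‖σ z‖ ≤ Real.exp (M / S.mu v) := by
      intro z hz hzM
      have : S.Le v z M := (le_lg hz).mono hzM
      unfold Le at this
      rwa [hσ] at this
    have hxm := hle x hx h1
    have hym := hle (1 - x) hy h2
    have h1m : 1 ≤ Real.exp (M / S.mu v) := Real.one_le_exp (by positivity)
    set m := Real.exp (M / S.mu v) with hm
    have hσx : 0 < ‖σ x‖ := by rw [← hσ]; exact (S.av v).pos hx
    have hσy : 0 < ‖σ (1 - x)‖ := by rw [← hσ]; exact (S.av v).pos hy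
    have hσe : 0 < ‖σ (x ^ 2 - x + 1)‖ := by rw [← hσ]; exact (S.av v).pos he
    have key := tiny_poly' (A := ‖σ x‖ ^ 2) (B := ‖σ (1 - x)‖ ^ 2) (C := 1) (m := m ^ 2)
      (by positivity) (by positivity) (by norm_num) (by gcongr) (by gcongr)
      (one_le_pow₀ h1m)
    have hq : ‖σ (x ^ 2 - x + 1)‖ ^ 2 = (‖σ x‖ ^ 2) ^ 2 + (‖σ (1 - x)‖ ^ 2) ^ 2 + 1 ^ 2
      - ‖σ x‖ ^ 2 * ‖σ (1 - x)‖ ^ 2 - ‖σ (1 - x)‖ ^ 2 * 1 - 1 * ‖σ x‖ ^ 2 := by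
      have := normSq_quad (σ x)
      simp only [Complex.normSq_eq_norm_sq] at this
      simpa using this
    rw [← hq] at key
    have hl := Real.log_le_log (by positivity) key
    have hm0 : 0 < m := by linarith
    rw [Real.log_mul (by positivity) (by positivity), Real.log_mul (by positivity) (by positivity),
      Real.log_mul (by positivity) (by positivity), Real.log_mul (by positivity) (by positivity),
      Real.log_mul (by positivity) (by positivity), Real.log_pow, Real.log_pow, Real.log_pow,
      Real.log_pow, Real.log_pow, hm, Real.log_exp, Real.log_one] at hl
    unfold lg
    rw [hσ, hσ, hσ, Real.log_div (by norm_num) (by norm_num)]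
    have h5 := mul_le_mul_of_nonneg_left hl hmu.le
    have h6 : S.mu v * (M / S.mu v) = M := by field_simp
    push_cast at h5
    have h7 : S.mu v * (Real.log 4 + 5 * (2 * (M / S.mu v))) = S.mu v * Real.log 4 + 10 * M := by
      rw [mul_add, ← h6]; field_simp; ring
    rw [h7] at h5
    linarith

lemma ht_tiny {x : K} (h : S.Sol x) (he : x ^ 2 - x + 1 ≠ 0) :
    S.D * Real.log (27 / 4) ≤ 10 * ht (S.Lg x) := by
  have heO : x ^ 2 - x + 1 ∈ S.O :=
    S.O.add_mem (S.O.sub_mem (S.O.pow_mem h.xO 2) h.xO) S.O.one_mem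
  have h1 := sum_lg_nonneg heO he
  have h2 := sum_lg_eq_zero h.xO h.xiO h.x0
  have h3 := sum_lg_eq_zero h.yO h.yiO h.y0
  have h4 := Finset.sum_le_sum fun v (_ : v ∈ Finset.univ) => lg_tiny (S := S) h.x0 h.y0 he v
  rw [Finset.sum_add_distrib, ← Finset.sum_mul, ← Finset.mul_sum, ← Finset.mul_sum,
    Finset.sum_add_distrib, Finset.sum_add_distrib, h2, h3] at h4
  unfold ht D
  linarith

lemma vand_le {m : ℕ} {v : ι} (u w : Fin m → K) (α β : ℝ) (M : Fin m → ℝ)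
    (hu : ∀ i, S.Le v (u i) (α + M i)) (hw : ∀ i, S.Le v (w i) (β + M i)) :
    S.Le v (∏ i, ∏ j ∈ Finset.Ioi i, (u j * w i - u i * w j))
      ((m * (m - 1) / 2 : ℝ) * (α + β) + (m - 1) * ∑ i, M i + S.ar v * Real.log (m.factorial)) := by
  rw [← Matrix.det_projVandermonde, Matrix.det_apply']
  have hs : ∑ i : Fin m, ((i : ℕ) : ℝ) = m * (m - 1) / 2 := by
    rw [Fin.sum_univ_eq_sum_range (fun i => (i : ℝ))]
    induction m with
    | zero => simp
    | succ k ih =>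
      clear hu hw
      have : ∀ k : ℕ, ∑ i ∈ Finset.range k, (i : ℝ) = k * (k - 1) / 2 := by
        intro k
        induction k with
        | zero => simp
        | succ k ih => rw [Finset.sum_range_succ, ih]; push_cast; ring
      exact this _
  refine Le.sum (S := S) Finset.univ (fun σ => ((Equiv.Perm.sign σ : ℤˣ) : ℤ)) _ ?_ ?_ ?_
  · exact_mod_cast Nat.one_le_iff_ne_zero.2 (Nat.factorial_ne_zero m)
  · have : ∀ σ : Equiv.Perm (Fin m), |(((Equiv.Perm.sign σ : ℤˣ) : ℤ) : ℝ)| = 1 := by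
      intro σ
      rcases Int.units_eq_one_or (Equiv.Perm.sign σ) with h | h <;> simp [h]
    simp only [this]
    simp [Fintype.card_perm]
  · intro σ _
    have : ∀ i ∈ (Finset.univ : Finset (Fin m)), S.Le v (Matrix.projVandermonde u w (σ i) i)
        ((i : ℕ) * (α + M (σ i)) + ((m : ℝ) - 1 - (i : ℕ)) * (β + M (σ i))) := by
      intro i _
      rw [Matrix.projVandermonde_apply]
      refine (((hu _).pow _).mul ((hw _).pow _)).mono (le_of_eq ?_)
      rw [Fin.val_rev]
      have : (i : ℕ) + 1 ≤ m := i.2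
      push_cast [Nat.cast_sub this]
      ring
    refine (Le.prod _ this).mono (le_of_eq ?_)
    have h2 : ∀ i : Fin m, ((i : ℕ) * (α + M (σ i)) + ((m : ℝ) - 1 - (i : ℕ)) * (β + M (σ i)))
        = (i : ℕ) * (α - β) + (m - 1) * β + (m - 1) * M (σ i) := by intro i; ring
    simp only [h2]
    rw [Finset.sum_add_distrib, Finset.sum_add_distrib, ← Finset.sum_mul, hs,
      ← Finset.mul_sum (f := fun i => M (σ i)), Equiv.sum_comp σ M]
    simp
    ring

lemma gap {m : ℕ} (x : Fin m → K) (hx : ∀ i, S.Sol (x i)) (hinj : Function.Injective x)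
    {ξ : ι → ℝ × ℝ} (hξ : Sz ξ) :
    (m * (m - 1) / 2 : ℝ) * ht ξ ≤
      S.D * Real.log m.factorial + (m - 1) * ∑ i, ht (S.Lg (x i) - ξ) := by
  set V : K := ∏ i, ∏ j ∈ Finset.Ioi i, (x j - x i) with hV
  have hV0 : V ≠ 0 := by
    refine Finset.prod_ne_zero_iff.2 fun i _ => Finset.prod_ne_zero_iff.2 fun j hj => ?_
    rw [sub_ne_zero]
    exact fun h => (Finset.mem_Ioi.1 hj).ne' (hinj h)
  have hVO : V ∈ S.O := S.O.prod_mem fun i _ => S.O.prod_mem fun j _ =>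
    S.O.sub_mem (hx j).xO (hx i).xO
  have hc : (0 : ℝ) ≤ m * (m - 1) / 2 := by
    rcases Nat.eq_zero_or_pos m with rfl | hm
    · simp
    · have : (1 : ℝ) ≤ m := by exact_mod_cast hm
      have : (0 : ℝ) ≤ m - 1 := by linarith
      positivity
  have key : ∀ v, S.lg v V ≤ (m * (m - 1) / 2 : ℝ) * ((ξ v).1 + (ξ v).2 - mx (ξ v)) +
      (m - 1) * ∑ i, mx ((S.Lg (x i) - ξ) v) + S.ar v * Real.log m.factorial := by
    intro v
    set M : Fin m → ℝ := fun i => mx ((S.Lg (x i) - ξ) v) with hM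
    have hx1 : ∀ i, S.Le v (x i) ((ξ v).1 + M i) := by
      intro i
      refine (le_lg (hx i).x0).mono ?_
      have := fst_le_mx ((S.Lg (x i) - ξ) v)
      simp only [Pi.sub_apply, Prod.fst_sub, Lg] at this
      simp only [hM, Pi.sub_apply, Lg]
      linarith
    have hy1 : ∀ i, S.Le v (1 - x i) ((ξ v).2 + M i) := by
      intro i
      refine (le_lg (hx i).y0).mono ?_
      have := snd_le_mx ((S.Lg (x i) - ξ) v)
      simp only [Pi.sub_apply, Prod.snd_sub, Lg] at this
      simp only [hM, Pi.sub_apply, Lg]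
      linarith
    have ho : ∀ i, S.Le v (1 : K) (0 + M i) := by
      intro i
      refine (Le.one v).mono ?_
      simpa using mx_nonneg _
    have e1 := vand_le (S := S) x (fun _ => 1) (ξ v).1 0 M hx1 ho
    have e2 := vand_le (S := S) (fun _ => 1) (fun i => 1 - x i) 0 (ξ v).2 M ho hy1
    have e3 := vand_le (S := S) x (fun i => 1 - x i) (ξ v).1 (ξ v).2 M hx1 hy1
    have f1 : ∏ i, ∏ j ∈ Finset.Ioi i, (x j * 1 - x i * 1) = V := by simp [hV]
    have f2 : ∏ i, ∏ j ∈ Finset.Ioi i, (1 * (1 - x i) - 1 * (1 - x j)) = V := by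
      rw [hV]; refine Finset.prod_congr rfl fun i _ => Finset.prod_congr rfl fun j _ => ?_; ring
    have f3 : ∏ i, ∏ j ∈ Finset.Ioi i, (x j * (1 - x i) - x i * (1 - x j)) = V := by
      rw [hV]; refine Finset.prod_congr rfl fun i _ => Finset.prod_congr rfl fun j _ => ?_; ring
    rw [f1] at e1
    rw [f2] at e2
    rw [f3] at e3
    have g1 := e1.lg_le hV0
    have g2 := e2.lg_le hV0
    have g3 := e3.lg_le hV0
    have hmx : mx (ξ v) = (ξ v).1 ∨ mx (ξ v) = (ξ v).2 ∨ mx (ξ v) = 0 := by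
      unfold mx
      rcases max_choice (max (ξ v).1 (ξ v).2) 0 with h | h
      · rw [h]
        rcases max_choice (ξ v).1 (ξ v).2 with h' | h' <;> simp [h']
      · simp [h]
    rcases hmx with h | h | h
    · rw [h]; refine g2.trans (le_of_eq ?_); ring
    · rw [h]; refine g1.trans (le_of_eq ?_); ring
    · rw [h]; refine g3.trans (le_of_eq ?_); ring
  have h1 := sum_lg_nonneg hVO hV0
  have h2 := h1.trans (Finset.sum_le_sum fun v _ => key v)
  rw [Finset.sum_add_distrib, Finset.sum_add_distrib, ← Finset.mul_sum, ← Finset.mul_sum,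
    ← Finset.sum_mul, Finset.sum_sub_distrib, Finset.sum_add_distrib, hξ.fst, hξ.snd,
    Finset.sum_comm] at h2
  unfold ht D
  linarith

lemma gap_two {x x' : K} (hx : S.Sol x) (hx' : S.Sol x') (hne : x ≠ x') :
    ht (S.Lg x) ≤ S.D * Real.log 2 + ht (S.Lg x' - S.Lg x) := by
  have := gap (S := S) ![x, x'] (by intro i; fin_cases i <;> simp [hx, hx'])
    (by
      intro i j hij
      fin_cases i <;> fin_cases j <;> simp_all) hx.sz
  simp [Fin.sum_univ_two] at this
  have h0 : ht (0 : ι → ℝ × ℝ) = 0 := by simp [ht, mx]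
  rw [h0] at this
  norm_num at this
  linarith

end PlaceSys
end SUnitBound

namespace SUnitBound

section Pade

/-- the generalised binomial coefficient used in the Padé identity -/
noncomputable def gch (a b j : ℕ) : ℤ := Ring.choose ((j : ℤ) - a - 1) b

lemma gch_lo {a b j : ℕ} (h : j ≤ a) : gch a b j = (-1) ^ b * ((a - j + b).choose b : ℤ) := by
  obtain ⟨k, rfl⟩ := Nat.exists_eq_add_of_le h
  unfold gch
  have : ((j : ℤ) - ((j + k : ℕ) : ℤ) - 1) = -((k : ℤ) + 1) := by push_cast; ring
  rw [this, Ring.choose_neg, Int.negOnePow_def]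
  have h2 : ((k : ℤ) + 1 + b - 1) = ((k + b : ℕ) : ℤ) := by push_cast; ring
  rw [h2, Ring.choose_natCast]
  simp [Units.smul_def]

lemma gch_mid {a b j : ℕ} (h : a < j) (h' : j ≤ a + b) : gch a b j = 0 := by
  obtain ⟨k, rfl⟩ := Nat.exists_eq_add_of_lt h
  unfold gch
  have : (((a + k + 1 : ℕ) : ℤ) - (a : ℤ) - 1) = ((k : ℕ) : ℤ) := by push_cast; ring
  rw [this, Ring.choose_natCast, Nat.choose_eq_zero_of_lt (by omega)]
  rfl

lemma gch_hi {a b : ℕ} (k : ℕ) : gch a b (a + b + 1 + k) = ((b + k).choose b : ℤ) := by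
  unfold gch
  have : (((a + b + 1 + k : ℕ) : ℤ) - (a : ℤ) - 1) = ((b + k : ℕ) : ℤ) := by push_cast; ring
  rw [this, Ring.choose_natCast]

lemma gch_vand (a b j : ℕ) : gch a b j =
    ∑ i ∈ Finset.range (b + 1), ((j.choose i : ℕ) : ℤ) *
      ((-1) ^ (b - i) * ((a + b - i).choose (b - i) : ℤ)) := by
  unfold gch
  have : (j : ℤ) - a - 1 = (j : ℤ) + (-((a : ℤ) + 1)) := by ring
  rw [this, Ring.add_choose_eq b (Commute.all _ _), Finset.Nat.sum_antidiagonal_eq_sum_range_succ_mk]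
  refine Finset.sum_congr rfl fun i hi => ?_
  have hi' : i ≤ b := by simpa [Nat.lt_succ_iff] using hi
  simp only
  rw [Ring.choose_natCast, Ring.choose_neg]
  have h2 : ((a : ℤ) + 1 + ((b - i : ℕ) : ℤ) - 1) = ((a + b - i : ℕ) : ℤ) := by
    rw [Nat.cast_sub hi', Nat.cast_sub (by omega)]; push_cast; ring
  rw [h2, Ring.choose_natCast, Int.negOnePow_def]
  simp [Units.smul_def]

lemma sum_choose_choose {R : Type*} [CommRing R] (N i : ℕ) (hi : i ≤ N) (x : R) :
    ∑ j ∈ Finset.range (N + 1), (N.choose j : R) * (j.choose i : R) * (-x) ^ j =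
      (N.choose i : R) * (-x) ^ i * (1 - x) ^ (N - i) := by
  obtain ⟨M, rfl⟩ := Nat.exists_eq_add_of_le hi
  have h0 : ∀ j ∈ Finset.range i, ((i + M).choose j : R) * (j.choose i : R) * (-x) ^ j = 0 := by
    intro j hj
    rw [Nat.choose_eq_zero_of_lt (Finset.mem_range.1 hj)]; simp
  rw [show i + M + 1 = i + (M + 1) by ring, Finset.sum_range_add, Finset.sum_eq_zero h0, zero_add]
  have h1 : (1 - x) ^ (i + M - i) = (-x + 1) ^ M := by
    rw [Nat.add_sub_cancel_left]; ring_nf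
  rw [h1, add_pow, Finset.mul_sum]
  refine Finset.sum_congr rfl fun k hk => ?_
  have hk' : k ≤ M := by simpa [Nat.lt_succ_iff] using hk
  have := Nat.choose_mul (n := i + M) (k := i + k) (s := i) (by omega)
  rw [Nat.add_sub_cancel_left, Nat.add_sub_cancel_left] at this
  have h2 : ((i + M).choose (i + k) : R) * ((i + k).choose i : R) =
      ((i + M).choose i : R) * (M.choose k : R) := by exact_mod_cast congrArg (Nat.cast (R := R)) this
  rw [h2, pow_add, one_pow]; ring

/-- Padé identity -/
lemma pade_identity {R : Type*} [CommRing R] (a b c : ℕ) (x : R) :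
    (∑ j ∈ Finset.range (a + 1),
        (((a + b + c + 1).choose j * ((-1) ^ j * gch a b j) : ℤ) : R) * (x ^ j * (1 - x) ^ 0)) +
      x ^ (a + b + 1) * (∑ k ∈ Finset.range (c + 1),
        (((a + b + c + 1).choose (a + b + 1 + k) * ((-1) ^ (a + b + 1 + k) *
          gch a b (a + b + 1 + k)) : ℤ) : R) * (x ^ k * (1 - x) ^ 0)) =
      (1 - x) ^ (a + c + 1) * (∑ i ∈ Finset.range (b + 1),
        (((a + b + c + 1).choose i * ((-1) ^ i * ((-1) ^ (b - i) *
          ((a + b - i).choose (b - i) : ℤ))) : ℤ) : R) * (x ^ i * (1 - x) ^ (b - i))) := by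
  set N := a + b + c + 1 with hN
  have hF : ∑ j ∈ Finset.range (N + 1), (N.choose j : R) * (-x) ^ j * ((gch a b j : ℤ) : R) =
      ∑ i ∈ Finset.range (b + 1), (((-1) ^ (b - i) * ((a + b - i).choose (b - i) : ℤ) : ℤ) : R) *
        ((N.choose i : R) * (-x) ^ i * (1 - x) ^ (N - i)) := by
    have : ∀ j ∈ Finset.range (N + 1), (N.choose j : R) * (-x) ^ j * ((gch a b j : ℤ) : R) =
        ∑ i ∈ Finset.range (b + 1), (((-1) ^ (b - i) * ((a + b - i).choose (b - i) : ℤ) : ℤ) : R) *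
          ((N.choose j : R) * (j.choose i : R) * (-x) ^ j) := by
      intro j _
      rw [gch_vand, Int.cast_sum, Finset.mul_sum]
      refine Finset.sum_congr rfl fun i _ => ?_
      push_cast; ring
    rw [Finset.sum_congr rfl this, Finset.sum_comm]
    refine Finset.sum_congr rfl fun i hi => ?_
    rw [← Finset.mul_sum, sum_choose_choose N i (by have := Finset.mem_range.1 hi; omega)]
  have hsplit : ∑ j ∈ Finset.range (N + 1), (N.choose j : R) * (-x) ^ j * ((gch a b j : ℤ) : R) =
      ∑ j ∈ Finset.range (a + 1), (N.choose j : R) * (-x) ^ j * ((gch a b j : ℤ) : R) +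
      ∑ k ∈ Finset.range (c + 1), (N.choose (a + b + 1 + k) : R) * (-x) ^ (a + b + 1 + k) *
        ((gch a b (a + b + 1 + k) : ℤ) : R) := by
    rw [show N + 1 = (a + 1 + b) + (c + 1) by omega, Finset.sum_range_add, Finset.sum_range_add]
    rw [Finset.sum_eq_zero (s := Finset.range b), add_zero]
    · congr 1
      refine Finset.sum_congr rfl fun k _ => ?_
      rw [show a + 1 + b + k = a + b + 1 + k by ring]
    · intro k hk
      have := Finset.mem_range.1 hk
      rw [gch_mid (by omega) (by omega)]; simp
  rw [hsplit] at hF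
  rw [Finset.mul_sum, Finset.mul_sum]
  refine Eq.trans ?_ (hF.trans ?_)
  · congr 1
    · refine Finset.sum_congr rfl fun j _ => ?_
      rw [neg_pow x]; push_cast; ring
    · refine Finset.sum_congr rfl fun j _ => ?_
      rw [neg_pow x]; push_cast; ring
  · refine Finset.sum_congr rfl fun i hi => ?_
    have hi' : i ≤ b := by simpa [Nat.lt_succ_iff] using hi
    rw [show N - i = (a + c + 1) + (b - i) by omega, neg_pow x, pow_add]; push_cast; ring

end Pade
end SUnitBound

namespace SUnitBound
section Pade2
open Polynomial

/-- `f` is an integral combination of monomials `x^i (1-x)^j`, `i + j ≤ n`, of length at most `B` -/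
def IsForm {K : Type*} [Field K] (n : ℕ) (B : ℝ) (f : Polynomial K) : Prop :=
  ∃ (m : ℕ) (c : ℕ → ℤ) (p q : ℕ → ℕ), (∀ i ∈ Finset.range m, p i + q i ≤ n) ∧
    ∑ i ∈ Finset.range m, |(c i : ℝ)| ≤ B ∧
    f = ∑ i ∈ Finset.range m, ((c i : ℤ) : Polynomial K) * (Polynomial.X ^ p i * (1 - Polynomial.X) ^ q i)

variable {K : Type*} [Field K]

lemma IsForm.neg {n : ℕ} {B : ℝ} {f : Polynomial K} (h : IsForm n B f) : IsForm n B (-f) := by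
  obtain ⟨m, c, p, q, h1, h2, h3⟩ := h
  refine ⟨m, fun i => - c i, p, q, h1, by simpa using h2, ?_⟩
  rw [h3, ← Finset.sum_neg_distrib]
  refine Finset.sum_congr rfl fun i _ => by push_cast; ring

lemma IsForm.natDegree_le {n : ℕ} {B : ℝ} {f : Polynomial K} (h : IsForm n B f) :
    f.natDegree ≤ n := by
  obtain ⟨m, c, p, q, h1, h2, rfl⟩ := h
  refine natDegree_sum_le_of_forall_le _ _ fun i hi => ?_
  have hX : (1 - Polynomial.X : Polynomial K).natDegree ≤ 1 := by
    refine (natDegree_sub_le _ _).trans ?_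
    simp
  have hY : ((1 - Polynomial.X : Polynomial K) ^ q i).natDegree ≤ q i := by
    have := Polynomial.natDegree_pow_le_of_le (q i) hX
    simpa using this
  have hXp : ((Polynomial.X : Polynomial K) ^ p i).natDegree ≤ p i := natDegree_X_pow_le _
  have h3 := natDegree_mul_le_of_le hXp hY
  have h0 : (((c i : ℤ) : Polynomial K)).natDegree ≤ 0 := (natDegree_intCast _).le
  have h4 := natDegree_mul_le_of_le h0 h3
  have := h1 i hi
  exact h4.trans (by omega)

namespace PlaceSys
variable {ι : Type*} [Fintype ι] {S : PlaceSys K ι}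

lemma form_mem {n : ℕ} {B : ℝ} {f : Polynomial K} (h : IsForm n B f) {x : K} (hx : S.Sol x) :
    f.eval x ∈ S.O := by
  obtain ⟨m, c, p, q, h1, h2, rfl⟩ := h
  rw [Polynomial.eval_finsetSum]
  refine S.O.sum_mem fun i _ => ?_
  simp only [Polynomial.eval_mul, Polynomial.eval_intCast, Polynomial.eval_pow, Polynomial.eval_X, Polynomial.eval_sub, Polynomial.eval_one]
  exact S.O.mul_mem (intCast_mem _ _) (S.O.mul_mem (S.O.pow_mem hx.xO _) (S.O.pow_mem hx.yO _))

lemma form_le {n : ℕ} {B : ℝ} (hB : 1 ≤ B) {f : Polynomial K} (h : IsForm n B f) {x : K}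
    (hx : S.Sol x) (v : ι) :
    S.Le v (f.eval x) (n * mx (S.Lg x v) + S.ar v * Real.log B) := by
  obtain ⟨m, c, p, q, h1, h2, rfl⟩ := h
  rw [Polynomial.eval_finsetSum]
  simp only [Polynomial.eval_mul, Polynomial.eval_intCast, Polynomial.eval_pow, Polynomial.eval_X, Polynomial.eval_sub, Polynomial.eval_one]
  refine Le.sum (S := S) (Finset.range m) c _ hB h2 ?_
  intro i hi
  have hfx : S.Le v x (mx (S.Lg x v)) := (le_lg hx.x0).mono (fst_le_mx (S.Lg x v))
  have hfy : S.Le v (1 - x) (mx (S.Lg x v)) := (le_lg hx.y0).mono (snd_le_mx (S.Lg x v))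
  refine ((hfx.pow _).mul (hfy.pow _)).mono ?_
  rw [← add_mul]
  have h0 := mx_nonneg (S.Lg x v)
  have : ((p i : ℝ) + q i) ≤ n := by exact_mod_cast h1 i hi
  gcongr
end PlaceSys

lemma sum_choose_shift (N t m : ℕ) : ∑ i ∈ Finset.range m, N.choose (t + i) ≤ 2 ^ N := by
  calc _ ≤ ∑ i ∈ Finset.range (t + m), N.choose i := by
        rw [Finset.sum_range_add]; omega
    _ ≤ ∑ i ∈ Finset.range (t + m + (N + 1)), N.choose i :=
        Finset.sum_le_sum_of_subset (by intro i; simp; omega)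
    _ = ∑ i ∈ Finset.range (N + 1), N.choose i := by
        rw [add_comm (t + m), Finset.sum_range_add]
        rw [Finset.sum_eq_zero (s := Finset.range (t + m)), add_zero]
        intro i _
        exact Nat.choose_eq_zero_of_lt (by omega)
    _ = 2 ^ N := Nat.sum_range_choose N

lemma coeff_bound (n N t m : ℕ) (hN : N = 3 * n) (e : ℕ → ℤ)
    (he : ∀ i ∈ Finset.range m, |e i| ≤ 4 ^ n) :
    ∑ i ∈ Finset.range m, |((N.choose (t + i) * e i : ℤ) : ℝ)| ≤ 2 ^ (5 * n) := by
  have h1 : ∀ i ∈ Finset.range m, |((N.choose (t + i) * e i : ℤ) : ℝ)| ≤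
      (N.choose (t + i) : ℝ) * 4 ^ n := by
    intro i hi
    push_cast
    rw [abs_mul, Nat.abs_cast]
    gcongr
    exact_mod_cast he i hi
  refine (Finset.sum_le_sum h1).trans ?_
  rw [← Finset.sum_mul]
  have h2 : ((∑ i ∈ Finset.range m, N.choose (t + i) : ℕ) : ℝ) ≤ 2 ^ N := by
    exact_mod_cast sum_choose_shift N t m
  push_cast at h2
  calc _ ≤ (2 : ℝ) ^ N * 4 ^ n := by gcongr
    _ = 2 ^ (5 * n) := by
      rw [hN, show (4 : ℝ) = 2 ^ 2 by norm_num, ← pow_mul, ← pow_add]; congr 1; ring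

lemma choose_le_four {n k l : ℕ} (h : k ≤ 2 * n) : (k.choose l : ℤ) ≤ 4 ^ n := by
  have h1 : k.choose l ≤ 2 ^ k := Nat.choose_le_two_pow k l
  have h2 : 2 ^ k ≤ 2 ^ (2 * n) := Nat.pow_le_pow_right (by norm_num) h
  have h3 : 2 ^ (2 * n) = 4 ^ n := by rw [pow_mul]; norm_num
  exact_mod_cast (h1.trans (h2.trans h3.le))

lemma abs_sign_mul (k : ℕ) (z : ℤ) : |(-1) ^ k * z| = |z| := by
  rw [abs_mul, abs_pow]; simp

lemma gch_abs_lo {n a b j : ℕ} (h : j ≤ a) (hab : a + b ≤ 2 * n) :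
    |(-1) ^ j * gch a b j| ≤ 4 ^ n := by
  rw [abs_sign_mul, gch_lo h, abs_sign_mul, Nat.abs_cast]
  exact choose_le_four (by omega)

lemma gch_abs_hi {n a b k : ℕ} (l : ℕ) (hab : b + k ≤ 2 * n) :
    |(-1) ^ l * gch a b (a + b + 1 + k)| ≤ 4 ^ n := by
  rw [abs_sign_mul, gch_hi, Nat.abs_cast]
  exact choose_le_four (by omega)

lemma pade_forms [CharZero K] (n : ℕ) (hn : 1 ≤ n) :
    ∃ p1 p2 p3 q1 q2 q3 : Polynomial K,
      (IsForm n (2 ^ (5 * n)) p1 ∧ IsForm n (2 ^ (5 * n)) p2 ∧ IsForm n (2 ^ (5 * n)) p3) ∧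
      (IsForm n (2 ^ (5 * n)) q1 ∧ IsForm n (2 ^ (5 * n)) q2 ∧ IsForm n (2 ^ (5 * n)) q3) ∧
      p1 * Polynomial.X ^ (2 * n) + p2 * (1 - Polynomial.X) ^ (2 * n) + p3 = 0 ∧
      q1 * Polynomial.X ^ (2 * n) + q2 * (1 - Polynomial.X) ^ (2 * n) + q3 = 0 ∧
      ∀ x : K, (p1 * q2 - q1 * p2).eval x ≠ 0 := by
  obtain ⟨k, rfl⟩ : ∃ k, n = k + 1 := ⟨n - 1, by omega⟩
  set n := k + 1 with hnk
  have id1 := pade_identity n n k (Polynomial.X : Polynomial K)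
  have id2 := pade_identity n k n (Polynomial.X : Polynomial K)
  set A1 := ∑ j ∈ Finset.range (n + 1),
        (((n + n + k + 1).choose j * ((-1) ^ j * gch n n j) : ℤ) : Polynomial K) *
        ((Polynomial.X : Polynomial K) ^ j * (1 - Polynomial.X) ^ 0) with hA1
  set C1 := ∑ k_1 ∈ Finset.range (k + 1),
        (((n + n + k + 1).choose (n + n + 1 + k_1) * ((-1) ^ (n + n + 1 + k_1) *
          gch n n (n + n + 1 + k_1)) : ℤ) : Polynomial K) *
          ((Polynomial.X : Polynomial K) ^ k_1 * (1 - Polynomial.X) ^ 0) with hC1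
  set B1 := ∑ i ∈ Finset.range (n + 1),
        (((n + n + k + 1).choose i * ((-1) ^ i * ((-1) ^ (n - i) *
          ((n + n - i).choose (n - i) : ℤ))) : ℤ) : Polynomial K) *
          ((Polynomial.X : Polynomial K) ^ i * (1 - Polynomial.X) ^ (n - i)) with hB1
  set A2 := ∑ j ∈ Finset.range (n + 1),
        (((n + k + n + 1).choose j * ((-1) ^ j * gch n k j) : ℤ) : Polynomial K) *
        ((Polynomial.X : Polynomial K) ^ j * (1 - Polynomial.X) ^ 0) with hA2
  set C2 := ∑ k_1 ∈ Finset.range (n + 1),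
        (((n + k + n + 1).choose (n + k + 1 + k_1) * ((-1) ^ (n + k + 1 + k_1) *
          gch n k (n + k + 1 + k_1)) : ℤ) : Polynomial K) *
          ((Polynomial.X : Polynomial K) ^ k_1 * (1 - Polynomial.X) ^ 0) with hC2
  set B2 := ∑ i ∈ Finset.range (k + 1),
        (((n + k + n + 1).choose i * ((-1) ^ i * ((-1) ^ (k - i) *
          ((n + k - i).choose (k - i) : ℤ))) : ℤ) : Polynomial K) *
          ((Polynomial.X : Polynomial K) ^ i * (1 - Polynomial.X) ^ (k - i)) with hB2
  have fA1 : IsForm n (2 ^ (5 * n)) A1 := by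
    refine ⟨_, _, _, _, ?_, ?_, hA1⟩
    · intro i hi; have := Finset.mem_range.1 hi; omega
    · have := coeff_bound n (n + n + k + 1) 0 (n + 1) (by omega) (fun j => (-1) ^ j * gch n n j)
        (by intro i hi; exact gch_abs_lo (by have := Finset.mem_range.1 hi; omega) (by omega))
      simpa only [zero_add] using this
  have fA2 : IsForm n (2 ^ (5 * n)) A2 := by
    refine ⟨_, _, _, _, ?_, ?_, hA2⟩
    · intro i hi; have := Finset.mem_range.1 hi; omega
    · have := coeff_bound n (n + k + n + 1) 0 (n + 1) (by omega) (fun j => (-1) ^ j * gch n k j)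
        (by intro i hi; exact gch_abs_lo (by have := Finset.mem_range.1 hi; omega) (by omega))
      simpa only [zero_add] using this
  have fB1 : IsForm n (2 ^ (5 * n)) B1 := by
    refine ⟨_, _, _, _, ?_, ?_, hB1⟩
    · intro i hi; have := Finset.mem_range.1 hi; omega
    · have := coeff_bound n (n + n + k + 1) 0 (n + 1) (by omega)
        (fun i => (-1) ^ i * ((-1) ^ (n - i) * ((n + n - i).choose (n - i) : ℤ)))
        (by
          intro i hi
          rw [abs_sign_mul, abs_sign_mul, Nat.abs_cast]; exact choose_le_four (by omega))
      simpa only [zero_add] using this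
  have fC2 : IsForm n (2 ^ (5 * n)) C2 := by
    refine ⟨_, _, _, _, ?_, ?_, hC2⟩
    · intro i hi; have := Finset.mem_range.1 hi; omega
    · exact coeff_bound n (n + k + n + 1) (n + k + 1) (n + 1) (by omega)
        (fun i => (-1) ^ (n + k + 1 + i) * gch n k (n + k + 1 + i))
        (by
          intro i hi
          exact gch_abs_hi _ (by have := Finset.mem_range.1 hi; omega))
  have fC1 : IsForm n (2 ^ (5 * n)) (Polynomial.X * C1) := by
    refine ⟨k + 1, fun k_1 => ((n + n + k + 1).choose (n + n + 1 + k_1) *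
      ((-1) ^ (n + n + 1 + k_1) * gch n n (n + n + 1 + k_1)) : ℤ), fun i => i + 1, fun _ => 0,
      ?_, ?_, ?_⟩
    · intro i hi; have := Finset.mem_range.1 hi; simp only; omega
    · exact coeff_bound n (n + n + k + 1) (n + n + 1) (k + 1) (by omega)
        (fun i => (-1) ^ (n + n + 1 + i) * gch n n (n + n + 1 + i))
        (by
          intro i hi
          exact gch_abs_hi _ (by have := Finset.mem_range.1 hi; omega))
    · rw [hC1, Finset.mul_sum]
      refine Finset.sum_congr rfl fun i _ => ?_
      ring
  have fB2 : IsForm n (2 ^ (5 * n)) ((1 - Polynomial.X) * B2) := by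
    refine ⟨k + 1, fun i => ((n + k + n + 1).choose i * ((-1) ^ i * ((-1) ^ (k - i) *
          ((n + k - i).choose (k - i) : ℤ))) : ℤ), fun i => i, fun i => k - i + 1,
      ?_, ?_, ?_⟩
    · intro i hi; have := Finset.mem_range.1 hi; simp only; omega
    · have := coeff_bound n (n + k + n + 1) 0 (k + 1) (by omega)
        (fun i => (-1) ^ i * ((-1) ^ (k - i) * ((n + k - i).choose (k - i) : ℤ)))
        (by
          intro i hi
          rw [abs_sign_mul, abs_sign_mul, Nat.abs_cast]; exact choose_le_four (by omega))
      simpa only [zero_add] using this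
    · rw [hB2, Finset.mul_sum]
      refine Finset.sum_congr rfl fun i _ => ?_
      ring
  have r1 : (Polynomial.X * C1) * Polynomial.X ^ (2 * n) + (- B1) * (1 - Polynomial.X) ^ (2 * n) + A1 = 0 := by
    rw [show n + n + 1 = 2 * n + 1 by ring, show n + k + 1 = 2 * n by omega] at id1
    linear_combination id1
  have r2 : C2 * Polynomial.X ^ (2 * n) + (-((1 - Polynomial.X) * B2)) * (1 - Polynomial.X) ^ (2 * n) + A2 = 0 := by
    rw [show n + k + 1 = 2 * n by omega, show n + n + 1 = 2 * n + 1 by ring] at id2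
    linear_combination id2
  refine ⟨Polynomial.X * C1, - B1, A1, C2, -((1 - Polynomial.X) * B2), A2, ⟨fC1, fB1.neg, fA1⟩, ⟨fC2, fB2.neg, fA2⟩,
    r1, r2, ?_⟩
  set m := Polynomial.X * C1 * (-((1 - Polynomial.X) * B2)) - C2 * (- B1) with hm
  have hm23 : m * Polynomial.X ^ (2 * n) = (- B1) * A2 - (-((1 - Polynomial.X) * B2)) * A1 := by
    rw [hm]; linear_combination (-((1 - Polynomial.X) * B2)) * r1 - (- B1) * r2
  have hdeg : (m * Polynomial.X ^ (2 * n)).natDegree ≤ 2 * n := by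
    rw [hm23]
    refine (natDegree_sub_le _ _).trans (max_le ?_ ?_)
    · refine natDegree_mul_le.trans ?_
      have := fB1.neg.natDegree_le; have := fA2.natDegree_le; omega
    · refine natDegree_mul_le.trans ?_
      have := fB2.neg.natDegree_le; have := fA1.natDegree_le; omega
  have hm0 : m.eval 0 ≠ 0 := by
    have e1 : B1.eval 0 = (-1) ^ n * ((n + n).choose n : K) := by
      rw [hB1, Polynomial.eval_finsetSum, Finset.sum_range_succ']
      simp
    have e2 : C2.eval 0 = ((n + k + n + 1).choose (n + k + 1) : K) * (-1) ^ (n + k + 1) := by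
      rw [hC2, Polynomial.eval_finsetSum, Finset.sum_range_succ']
      have := gch_hi (a := n) (b := k) 0
      simp only [add_zero, Nat.choose_self] at this
      simp [this]
    have c1 : ((n + n).choose n : K) ≠ 0 :=
      Nat.cast_ne_zero.2 (Nat.choose_pos (by omega)).ne'
    have c2 : ((n + k + n + 1).choose (n + k + 1) : K) ≠ 0 :=
      Nat.cast_ne_zero.2 (Nat.choose_pos (by omega)).ne'
    rw [hm]
    simp only [Polynomial.eval_sub, Polynomial.eval_mul, Polynomial.eval_X, zero_mul, Polynomial.eval_neg, e1, e2]
    simp [c1, c2]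
  have hmne : m ≠ 0 := by intro h; rw [h] at hm0; simp at hm0
  have hmd : m.natDegree = 0 := by
    rw [natDegree_mul_X_pow _ hmne] at hdeg; omega
  intro x
  rw [eq_C_of_natDegree_eq_zero hmd] at hm0 ⊢
  simpa using hm0

end Pade2
end SUnitBound

namespace SUnitBound
namespace PlaceSys

variable {K : Type*} [Field K] {ι : Type*} [Fintype ι] {S : PlaceSys K ι}

lemma pade_aux {n : ℕ} (hn : 1 ≤ n) {x x' : K} (hx : S.Sol x) (hx' : S.Sol x') (r1 r2 r3 : K)
    (o1 : r1 ∈ S.O) (o2 : r2 ∈ S.O)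
    (l1 : ∀ v, S.Le v r1 (n * mx (S.Lg x v) + S.ar v * Real.log (2 ^ (5 * n))))
    (l2 : ∀ v, S.Le v r2 (n * mx (S.Lg x v) + S.ar v * Real.log (2 ^ (5 * n))))
    (l3 : ∀ v, S.Le v r3 (n * mx (S.Lg x v) + S.ar v * Real.log (2 ^ (5 * n))))
    (hr : r1 * x ^ (2 * n) + r2 * (1 - x) ^ (2 * n) + r3 = 0)
    (hne : x' / x ^ (2 * n) * r2 - (1 - x') / (1 - x) ^ (2 * n) * r1 ≠ 0) :
    n * ht (S.Lg x) ≤ ht (S.Lg x' - (2 * n : ℝ) • S.Lg x) + S.D * (6 * n * Real.log 2) := by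
  set Z1 := x' / x ^ (2 * n) with hZ1
  set Z2 := (1 - x') / (1 - x) ^ (2 * n) with hZ2
  set L := Z1 * r2 - Z2 * r1 with hL
  have hx0 := hx.x0
  have hy0 := hx.y0
  have hxp : x ^ (2 * n) ≠ 0 := pow_ne_zero _ hx0
  have hyp : (1 - x) ^ (2 * n) ≠ 0 := pow_ne_zero _ hy0
  have e1 : Z1 * x ^ (2 * n) = x' := by rw [hZ1]; field_simp
  have e2 : Z2 * (1 - x) ^ (2 * n) = 1 - x' := by rw [hZ2]; field_simp
  have hZ10 : Z1 ≠ 0 := div_ne_zero hx'.x0 hxp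
  have hZ20 : Z2 ≠ 0 := div_ne_zero hx'.y0 hyp
  have hO : L ∈ S.O := by
    have a1 : Z1 ∈ S.O := by
      rw [hZ1, div_eq_mul_inv, ← inv_pow]; exact S.O.mul_mem hx'.xO (S.O.pow_mem hx.xiO _)
    have a2 : Z2 ∈ S.O := by
      rw [hZ2, div_eq_mul_inv, ← inv_pow]; exact S.O.mul_mem hx'.yO (S.O.pow_mem hx.yiO _)
    exact S.O.sub_mem (S.O.mul_mem a1 o2) (S.O.mul_mem a2 o1)
  have f1 : L * x ^ (2 * n) = r2 - (- Z2) * r3 := by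
    rw [hL]; linear_combination r2 * e1 - r2 * (-e2)  - Z2 * hr
  have f2 : L * (1 - x) ^ (2 * n) = (- Z1) * r3 - r1 := by
    rw [hL]; linear_combination Z1 * hr - r1 * e1 - r1 * e2
  have key : ∀ v, S.lg v L + n * mx (S.Lg x v) ≤ mx ((S.Lg x' - (2 * n : ℝ) • S.Lg x) v) +
      S.ar v * (6 * n * Real.log 2) := by
    intro v
    set M := mx ((S.Lg x' - (2 * n : ℝ) • S.Lg x) v) with hM
    have hM0 : 0 ≤ M := mx_nonneg _
    have z1 : S.Le v Z1 M := by
      refine (le_lg hZ10).mono ?_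
      have := fst_le_mx ((S.Lg x' - (2 * n : ℝ) • S.Lg x) v)
      rw [← hM] at this
      refine le_trans (le_of_eq ?_) this
      rw [hZ1, div_eq_mul_inv, lg_mul hx'.x0 (inv_ne_zero hxp), lg_inv, lg_pow]
      simp [Lg]; ring
    have z2 : S.Le v Z2 M := by
      refine (le_lg hZ20).mono ?_
      have := snd_le_mx ((S.Lg x' - (2 * n : ℝ) • S.Lg x) v)
      rw [← hM] at this
      refine le_trans (le_of_eq ?_) this
      rw [hZ2, div_eq_mul_inv, lg_mul hx'.y0 (inv_ne_zero hyp), lg_inv, lg_pow]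
      simp [Lg]; ring
    set b := n * mx (S.Lg x v) + S.ar v * Real.log (2 ^ (5 * n)) with hb
    have g0 := ((z1.mul (l2 v)).sub (z2.mul (l1 v))).lg_le hne
    have g1 : S.Le v (L * x ^ (2 * n)) (M + b + S.ar v * Real.log 2) := by
      rw [f1]; exact ((l2 v).mono (by linarith)).sub (z2.neg.mul (l3 v))
    have g2 : S.Le v (L * (1 - x) ^ (2 * n)) (M + b + S.ar v * Real.log 2) := by
      rw [f2]; exact (z1.neg.mul (l3 v)).sub ((l1 v).mono (by linarith))
    have g1 := g1.lg_le (mul_ne_zero hne hxp)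
    have g2 := g2.lg_le (mul_ne_zero hne hyp)
    rw [lg_mul hne hxp, lg_pow] at g1
    rw [lg_mul hne hyp, lg_pow] at g2
    have hbd : b + S.ar v * Real.log 2 ≤ n * mx (S.Lg x v) + S.ar v * (6 * n * Real.log 2) := by
      rw [hb, Real.log_pow]
      have hl : 0 ≤ S.ar v * Real.log 2 := mul_nonneg (S.ar_nonneg v) (Real.log_nonneg (by norm_num))
      have hn' : (1 : ℝ) ≤ n := by exact_mod_cast hn
      push_cast
      nlinarith [mul_le_mul_of_nonneg_right hn' hl]
    have hmx : mx (S.Lg x v) = S.lg v x ∨ mx (S.Lg x v) = S.lg v (1 - x) ∨ mx (S.Lg x v) = 0 := by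
      unfold mx
      rcases max_choice (max (S.Lg x v).1 (S.Lg x v).2) 0 with h | h
      · rw [h]
        rcases max_choice (S.Lg x v).1 (S.Lg x v).2 with h' | h' <;> rw [h'] <;> simp [Lg]
      · simp [h]
    push_cast at g1 g2
    rcases hmx with h | h | h
    · rw [h] at hbd ⊢; linarith
    · rw [h] at hbd ⊢; linarith
    · rw [h] at hbd ⊢; linarith
  have h1 := sum_lg_nonneg hO hne
  have h2 := Finset.sum_le_sum fun v (_ : v ∈ Finset.univ) => key v
  rw [Finset.sum_add_distrib, Finset.sum_add_distrib, ← Finset.mul_sum, ← Finset.sum_mul] at h2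
  unfold ht D
  linarith

lemma pade_ht [CharZero K] {n : ℕ} (hn : 1 ≤ n) {x x' : K} (hx : S.Sol x) (hx' : S.Sol x') :
    n * ht (S.Lg x) ≤ ht (S.Lg x' - (2 * n : ℝ) • S.Lg x) + S.D * (6 * n * Real.log 2) := by
  obtain ⟨p1, p2, p3, q1, q2, q3, ⟨fp1, fp2, fp3⟩, ⟨fq1, fq2, fq3⟩, hp, hq, hm⟩ :=
    pade_forms (K := K) n hn
  have hB : (1 : ℝ) ≤ 2 ^ (5 * n) := one_le_pow₀ (by norm_num)
  have hpe := congrArg (Polynomial.eval x) hp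
  have hqe := congrArg (Polynomial.eval x) hq
  have hme := hm x
  simp only [Polynomial.eval_add, Polynomial.eval_mul, Polynomial.eval_pow, Polynomial.eval_X,
    Polynomial.eval_sub, Polynomial.eval_one, Polynomial.eval_zero] at hpe hqe hme
  by_cases h1 : x' / x ^ (2 * n) * p2.eval x - (1 - x') / (1 - x) ^ (2 * n) * p1.eval x = 0
  · by_cases h2 : x' / x ^ (2 * n) * q2.eval x - (1 - x') / (1 - x) ^ (2 * n) * q1.eval x = 0
    · exfalso
      have hZ : x' / x ^ (2 * n) ≠ 0 := div_ne_zero hx'.x0 (pow_ne_zero _ hx.x0)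
      apply hme
      apply mul_left_cancel₀ hZ
      linear_combination (Polynomial.eval x p1) * h2 - (Polynomial.eval x q1) * h1
    · exact pade_aux hn hx hx' _ _ _ (form_mem fq1 hx) (form_mem fq2 hx) (form_le hB fq1 hx)
        (form_le hB fq2 hx) (form_le hB fq3 hx) hqe h2
  · exact pade_aux hn hx hx' _ _ _ (form_mem fp1 hx) (form_mem fp2 hx) (form_le hB fp1 hx)
        (form_le hB fp2 hx) (form_le hB fp3 hx) hpe h1

end PlaceSys
end SUnitBound

namespace SUnitBound

open MeasureTheory Pointwise in
lemma packing {E : Type*} [NormedAddCommGroup E] [NormedSpace ℝ E] [FiniteDimensional ℝ E]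
    (h : E → ℝ) (hc : Continuous h) (hs : ∀ c : ℝ, 0 ≤ c → ∀ x, h (c • x) = c * h x)
    (hadd : ∀ x y, h (x + y) ≤ h x + h y) (hneg : ∀ x, h (-x) ≤ 2 * h x)
    (Cb : ℝ) (hC : ∀ x, ‖x‖ ≤ Cb * h x)
    {α : Type*} (I : Finset α) (P : α → E) (R ρ : ℝ) (hρ : 0 < ρ) (hR : 0 ≤ R)
    (hP : ∀ i ∈ I, h (P i) ≤ R) (M : ℕ)
    (hM : ∀ ξ : E, (I.filter fun i => h (P i - ξ) < ρ).card ≤ M) :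
    (I.card : ℝ) * ρ ^ (Module.finrank ℝ E) ≤ M * (R + 2 * ρ) ^ (Module.finrank ℝ E) := by
  let _ : MeasurableSpace E := borel E
  have _ : BorelSpace E := ⟨rfl⟩
  set μ : Measure E := Measure.addHaar with hμ
  set B : Set E := {x | h x < 1} with hB
  have h0 : h 0 = 0 := by have := hs 0 le_rfl 0; simpa using this
  have hBo : IsOpen B := isOpen_lt hc continuous_const
  have hBpos : μ B ≠ 0 := (hBo.measure_pos μ ⟨0, by simp [hB, h0]⟩).ne'
  have hnn : ∀ x, 0 ≤ h x := by
    intro x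
    have h1 := hadd x (-x)
    rw [add_neg_cancel, h0] at h1
    have := hneg x
    linarith
  have hBfin : μ B ≠ ⊤ := by
    have : Bornology.IsBounded B := by
      refine (Metric.isBounded_closedBall (x := (0 : E)) (r := |Cb|)).subset ?_
      intro x hx
      rw [mem_closedBall_zero_iff]
      refine (hC x).trans ?_
      calc Cb * h x ≤ |Cb| * h x := mul_le_mul_of_nonneg_right (le_abs_self _) (hnn x)
        _ ≤ |Cb| * 1 := mul_le_mul_of_nonneg_left (le_of_lt hx) (abs_nonneg _)
        _ = |Cb| := mul_one _
    exact this.measure_lt_top.ne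
  set r := Module.finrank ℝ E with hr
  have hball : ∀ t : ℝ, 0 < t → μ {x | h x < t} = ENNReal.ofReal (t ^ r) * μ B := by
    intro t ht
    have : {x | h x < t} = t • B := by
      ext x
      rw [Set.mem_smul_set_iff_inv_smul_mem₀ ht.ne']
      simp only [hB, Set.mem_ofPred_eq]
      rw [hs _ (inv_nonneg.2 ht.le), inv_mul_lt_iff₀ ht, mul_one]
    rw [this, Measure.addHaar_smul, abs_of_nonneg (by positivity)]
  have hmeas : ∀ i, MeasurableSet {ξ : E | h (P i - ξ) < ρ} := fun i =>
    (isOpen_lt (hc.comp (continuous_const.sub continuous_id)) continuous_const).measurableSet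
  have hA : ∀ i, μ {ξ : E | h (P i - ξ) < ρ} = ENNReal.ofReal (ρ ^ r) * μ B := by
    intro i
    rw [← hball ρ hρ]
    have := (Measure.measurePreserving_sub_left μ (P i)).measure_preimage
      (s := {x | h x < ρ}) (isOpen_lt hc continuous_const).measurableSet.nullMeasurableSet
    exact this
  have hR2 : 0 < R + 2 * ρ := by linarith
  have hBR : MeasurableSet {x | h x < R + 2 * ρ} := (isOpen_lt hc continuous_const).measurableSet
  have key : (I.card : ENNReal) * (ENNReal.ofReal (ρ ^ r) * μ B) ≤
      M * (ENNReal.ofReal ((R + 2 * ρ) ^ r) * μ B) := by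
    calc (I.card : ENNReal) * (ENNReal.ofReal (ρ ^ r) * μ B)
        = ∑ i ∈ I, μ {ξ : E | h (P i - ξ) < ρ} := by
          simp only [hA]; rw [Finset.sum_const, nsmul_eq_mul]
      _ = ∑ i ∈ I, ∫⁻ ξ, Set.indicator {ξ : E | h (P i - ξ) < ρ} 1 ξ ∂μ := by
          refine Finset.sum_congr rfl fun i _ => ?_
          rw [lintegral_indicator_one (hmeas i)]
      _ = ∫⁻ ξ, ∑ i ∈ I, Set.indicator {ξ : E | h (P i - ξ) < ρ} 1 ξ ∂μ := by
          rw [lintegral_finsetSum]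
          intro i _
          exact measurable_one.indicator (hmeas i)
      _ ≤ ∫⁻ ξ, Set.indicator {x | h x < R + 2 * ρ} (fun _ => (M : ENNReal)) ξ ∂μ := by
          refine lintegral_mono fun ξ => ?_
          have e : ∑ i ∈ I, Set.indicator {ξ : E | h (P i - ξ) < ρ} (1 : E → ENNReal) ξ =
              ((I.filter fun i => h (P i - ξ) < ρ).card : ENNReal) := by
            rw [Finset.card_filter]
            push_cast
            refine Finset.sum_congr rfl fun i _ => ?_
            simp [Set.indicator_apply]
          simp only
          rw [e]
          by_cases hξ : ξ ∈ {x | h x < R + 2 * ρ}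
          · rw [Set.indicator_of_mem hξ]
            exact_mod_cast hM ξ
          · rw [Set.indicator_of_notMem hξ]
            have : (I.filter fun i => h (P i - ξ) < ρ) = ∅ := by
              refine Finset.filter_eq_empty_iff.2 fun i hi hlt => hξ ?_
              have h1 := hadd (P i) (-(P i - ξ))
              have h2 := hneg (P i - ξ)
              have h3 := hP i hi
              rw [show P i + -(P i - ξ) = ξ by abel] at h1
              simp only [Set.mem_ofPred_eq]
              linarith
            simp [this]
      _ = M * (ENNReal.ofReal ((R + 2 * ρ) ^ r) * μ B) := by
          rw [lintegral_indicator_const hBR, hball _ hR2]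
  rw [← mul_assoc, ← mul_assoc] at key
  have key2 := (ENNReal.mul_le_mul_iff_left hBpos hBfin).1 key
  have e1 : (I.card : ENNReal) * ENNReal.ofReal (ρ ^ r) = ENNReal.ofReal (I.card * ρ ^ r) := by
    rw [ENNReal.ofReal_mul (by positivity), ENNReal.ofReal_natCast]
  have e2 : (M : ENNReal) * ENNReal.ofReal ((R + 2 * ρ) ^ r) =
      ENNReal.ofReal (M * (R + 2 * ρ) ^ r) := by
    rw [ENNReal.ofReal_mul (by positivity), ENNReal.ofReal_natCast]
  rw [e1, e2] at key2
  exact (ENNReal.ofReal_le_ofReal_iff (by positivity)).1 key2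

namespace PlaceSys
variable {ι : Type*} [Fintype ι]

lemma norm_le_ht {ξ : ι → ℝ × ℝ} (h : Sz ξ) : ‖ξ‖ ≤ 2 * ht ξ := by
  have hn := ht_neg h
  have h0 := ht_nonneg ξ
  have hle : ∀ (ζ : ι → ℝ × ℝ) (v : ι), mx (ζ v) ≤ ht ζ := fun ζ v =>
    Finset.single_le_sum (f := fun v => mx (ζ v)) (fun v _ => mx_nonneg _) (Finset.mem_univ v)
  refine (pi_norm_le_iff_of_nonneg (by linarith)).2 fun v => ?_
  have h1 := hle ξ v
  have h2 := hle (-ξ) v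
  have a1 := fst_le_mx (ξ v)
  have a2 := snd_le_mx (ξ v)
  have a3 := fst_le_mx ((-ξ) v)
  have a4 := snd_le_mx ((-ξ) v)
  simp only [Pi.neg_apply, Prod.fst_neg, Prod.snd_neg] at a3 a4 h2
  rw [Prod.norm_def]
  refine max_le ?_ ?_ <;> rw [Real.norm_eq_abs] <;> refine abs_le.2 ⟨?_, ?_⟩ <;> linarith

lemma continuous_ht : Continuous (ht : (ι → ℝ × ℝ) → ℝ) := by
  unfold ht mx
  fun_prop

lemma packing_ht (V : Submodule ℝ (ι → ℝ × ℝ)) (hV : ∀ ξ ∈ V, Sz ξ)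
    {α : Type*} (I : Finset α) (P : α → (ι → ℝ × ℝ)) (hPV : ∀ i ∈ I, P i ∈ V)
    (R ρ : ℝ) (hρ : 0 < ρ) (hR : 0 ≤ R)
    (hP : ∀ i ∈ I, ht (P i) ≤ R) (M : ℕ)
    (hM : ∀ ξ ∈ V, (I.filter fun i => ht (P i - ξ) < ρ).card ≤ M) :
    (I.card : ℝ) * ρ ^ (Module.finrank ℝ V) ≤ M * (R + 2 * ρ) ^ (Module.finrank ℝ V) := by
  classical
  have := packing (E := V) (fun ξ => ht (ξ : ι → ℝ × ℝ))
    (continuous_ht.comp continuous_subtype_val)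
    (fun c hc x => ht_smul hc _) (fun x y => ht_add _ _) (fun x => ht_neg (hV x x.2)) 2
    (fun x => norm_le_ht (hV x x.2)) I.attach (fun i => ⟨P i, hPV i i.2⟩) R ρ hρ hR
    (fun i _ => hP i i.2) M (by
      intro ξ
      refine le_trans (le_of_eq ?_) (hM ξ ξ.2)
      rw [← Finset.card_map (Function.Embedding.subtype _)]
      congr 1
      ext i
      simp [and_comm])
  simpa using this

end PlaceSys
end SUnitBound

namespace SUnitBound

lemma chain_growth {α : Type*} (h : α → ℝ) (q a : ℝ) (k : ℕ) :
    ∀ G : Finset α, G.card = k + 1 → (∀ i ∈ G, a ≤ h i) →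
    (∀ i ∈ G, ∀ j ∈ G, i ≠ j → h i ≤ h j → q * h i ≤ h j) → 0 ≤ q →
    ∃ i ∈ G, a * q ^ k ≤ h i := by
  classical
  induction k with
  | zero =>
    intro G hG ha _ _
    obtain ⟨i, hi⟩ := Finset.card_pos.1 (by omega : 0 < G.card)
    exact ⟨i, hi, by simpa using ha i hi⟩
  | succ k ih =>
    intro G hG ha hq hq0
    obtain ⟨i, hi, him⟩ := Finset.exists_max_image G h (Finset.card_pos.1 (by omega))
    obtain ⟨j, hj, hjk⟩ := ih (G.erase i) (by rw [Finset.card_erase_of_mem hi]; omega)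
      (fun j hj => ha j (Finset.mem_of_mem_erase hj))
      (fun i' hi' j' hj' => hq i' (Finset.mem_of_mem_erase hi') j' (Finset.mem_of_mem_erase hj')) hq0
    refine ⟨i, hi, ?_⟩
    have hjG := Finset.mem_of_mem_erase hj
    have := hq j hjG i hi (Finset.ne_of_mem_erase hj) (him j hjG)
    calc a * q ^ (k + 1) = q * (a * q ^ k) := by ring
      _ ≤ q * h j := mul_le_mul_of_nonneg_left hjk hq0
      _ ≤ h i := this

lemma chain_card {α : Type*} (h : α → ℝ) (q a b : ℝ) (k : ℕ) (hq1 : 1 ≤ q) (ha0 : 0 ≤ a)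
    (hk : b < a * q ^ k)
    (G : Finset α) (ha : ∀ i ∈ G, a ≤ h i) (hb : ∀ i ∈ G, h i ≤ b)
    (hq : ∀ i ∈ G, ∀ j ∈ G, i ≠ j → h i ≤ h j → q * h i ≤ h j) : G.card ≤ k := by
  by_contra hcon
  push Not at hcon
  obtain ⟨l, hl⟩ : ∃ l, G.card = l + 1 := ⟨G.card - 1, by omega⟩
  obtain ⟨i, hi, h1⟩ := chain_growth h q a l G hl ha hq (by linarith)
  have h2 := hb i hi
  have h3 : q ^ k ≤ q ^ l := pow_le_pow_right₀ hq1 (by omega)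
  have : a * q ^ k ≤ a * q ^ l := mul_le_mul_of_nonneg_left h3 ha0
  linarith

lemma log_const : (1.9 : ℝ) ≤ Real.log (27 / 4) := by
  rw [Real.le_log_iff_exp_le (by norm_num)]
  have h1 : Real.exp 1.9 ^ 10 ≤ (27 / 4) ^ 10 := by
    rw [← Real.exp_nat_mul, show ((10 : ℕ) : ℝ) * 1.9 = (19 : ℕ) * 1 by norm_num, Real.exp_nat_mul]
    calc Real.exp 1 ^ 19 ≤ 2.7182818286 ^ 19 := by
          gcongr; exact Real.exp_one_lt_d9.le
      _ ≤ _ := by norm_num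
  exact le_of_pow_le_pow_left₀ (by norm_num) (by norm_num) h1

set_option exponentiation.threshold 2000 in
lemma log_fact : Real.log (Nat.factorial 200) ≤ 875 := by
  rw [Real.log_le_iff_le_exp (by exact_mod_cast Nat.factorial_pos 200)]
  have h1 : ((Nat.factorial 200 : ℕ) : ℝ) * 10 ^ 875 ≤ 27 ^ 875 := by
    have : Nat.factorial 200 * 10 ^ 875 ≤ 27 ^ 875 := by
      norm_num [Nat.factorial]
    exact_mod_cast this
  have h2 : Real.exp 875 = Real.exp 1 ^ 875 := by
    rw [← Real.exp_nat_mul]; norm_num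
  rw [h2]
  calc ((Nat.factorial 200 : ℕ) : ℝ) ≤ 27 ^ 875 / 10 ^ 875 := by
        rw [le_div_iff₀ (by positivity)]; exact h1
    _ = (27 / 10) ^ 875 := by rw [div_pow]
    _ ≤ Real.exp 1 ^ 875 := by
        gcongr
        have := Real.exp_one_gt_d9
        norm_num at this ⊢
        linarith

namespace PlaceSys
variable {K : Type*} [Field K] {ι : Type*} [Fintype ι] {S : PlaceSys K ι}

/-- number of solutions of small height -/
lemma small_count (hD : 0 < S.D) (V : Submodule ℝ (ι → ℝ × ℝ)) (hV : ∀ ξ ∈ V, Sz ξ)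
    (X : Finset K) (hX : ∀ x ∈ X, S.Sol x) (hXV : ∀ x ∈ X, S.Lg x ∈ V)
    (he : ∀ x ∈ X, x ^ 2 - x + 1 ≠ 0) (hs : ∀ x ∈ X, ht (S.Lg x) ≤ S.D) (r : ℕ)
    (hr : Module.finrank ℝ V ≤ r) : X.card ≤ 199 * 23 ^ r := by
  classical
  set ρ : ℝ := 0.0485 * S.D with hρ
  have hρ0 : 0 < ρ := by positivity
  have hpk := packing_ht V hV X S.Lg hXV S.D ρ hρ0 hD.le hs 199 (by
    intro ξ hξ
    by_contra hcon
    push Not at hcon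
    obtain ⟨Y, hY, hYc⟩ := Finset.exists_subset_card_eq (show 200 ≤ _ from hcon)
    let e := Y.equivFinOfCardEq hYc
    have hmem : ∀ i : Fin 200, ((e.symm i : Y) : K) ∈ X ∧ ht (S.Lg (e.symm i : Y) - ξ) < ρ := by
      intro i
      have := hY (e.symm i).2
      simpa using this
    have hg := gap (S := S) (fun i : Fin 200 => ((e.symm i : Y) : K))
      (fun i => hX _ (hmem i).1)
      (fun i j hij => e.symm.injective (Subtype.ext hij)) (hV ξ hξ)
    have hsum : ∑ i : Fin 200, ht (S.Lg (e.symm i : Y) - ξ) ≤ 200 * ρ := by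
      refine (Finset.sum_le_sum fun i _ => (hmem i).2.le).trans (le_of_eq ?_)
      simp
    have h0 := hmem 0
    have ht0 := ht_tiny (hX _ h0.1) (he _ h0.1)
    have hadd := ht_add (S.Lg (e.symm 0 : Y) - ξ) ξ
    rw [sub_add_cancel] at hadd
    have hl := log_const
    have hf := log_fact
    have h1 : S.D * 1.9 ≤ S.D * Real.log (27 / 4) := mul_le_mul_of_nonneg_left hl hD.le
    have h2 : S.D * Real.log (Nat.factorial 200) ≤ S.D * 875 := mul_le_mul_of_nonneg_left hf hD.le
    generalize Real.log (Nat.factorial 200) = F at hg hf h2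
    push_cast at hg
    norm_num at hg
    norm_num at hρ
    have h02 := h0.2
    linarith)
  have h1 : (X.card : ℝ) * ρ ^ Module.finrank ℝ V ≤
      (199 * 23 ^ Module.finrank ℝ V) * ρ ^ Module.finrank ℝ V := by
    refine hpk.trans ?_
    push_cast
    rw [mul_assoc, ← mul_pow]
    gcongr
    rw [hρ]; norm_num; linarith
  have h2 := le_of_mul_le_mul_right h1 (by positivity)
  have h3 : (X.card : ℝ) ≤ 199 * 23 ^ r := by
    refine h2.trans ?_
    gcongr
    norm_num
  exact_mod_cast h3

lemma ht_diff (u u' : ι → ℝ × ℝ) {a b ε : ℝ} (ha : 0 ≤ a) (hab : a ≤ b) (hu' : ht u' = 1)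
    (hε : ht (u' - u) ≤ ε) : ht (b • u' - a • u) ≤ a * ε + (b - a) := by
  have : b • u' - a • u = a • (u' - u) + (b - a) • u' := by
    rw [smul_sub, sub_smul]; abel
  rw [this]
  refine (ht_add _ _).trans ?_
  rw [ht_smul ha, ht_smul (by linarith), hu']
  have := mul_le_mul_of_nonneg_left hε ha
  linarith

lemma log_two_lt : Real.log 2 < 0.6932 := by
  have := Real.log_two_lt_d9
  norm_num at this ⊢
  linarith

/-- growth in a narrow cone -/
lemma cone_growth {x x' : K} (hx : S.Sol x) (hx' : S.Sol x') (hne : x ≠ x')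
    (hD : 0 ≤ S.D) (h1 : S.D < ht (S.Lg x)) (h2 : ht (S.Lg x) ≤ ht (S.Lg x'))
    (hε : ht ((ht (S.Lg x'))⁻¹ • S.Lg x' - (ht (S.Lg x))⁻¹ • S.Lg x) ≤ 1 / 6) :
    1.14 * ht (S.Lg x) ≤ ht (S.Lg x') := by
  have p : 0 < ht (S.Lg x) := by linarith
  have p' : 0 < ht (S.Lg x') := by linarith
  have hd := ht_diff (a := ht (S.Lg x)) (b := ht (S.Lg x')) _ _ p.le h2
    (by rw [ht_smul (inv_nonneg.2 p'.le), inv_mul_cancel₀ p'.ne']) hε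
  rw [smul_inv_smul₀ p.ne', smul_inv_smul₀ p'.ne'] at hd
  have hg := gap_two hx hx' hne
  have hl := log_two_lt
  have : S.D * Real.log 2 ≤ S.D * 0.6932 := mul_le_mul_of_nonneg_left hl.le hD
  norm_num at *
  linarith

/-- upper bound in a narrow cone -/
lemma cone_bound [CharZero K] {x x' : K} (hx : S.Sol x) (hx' : S.Sol x')
    (hD : 0 < S.D) (h1 : 25 * S.D ≤ ht (S.Lg x))
    (hε : ht ((ht (S.Lg x'))⁻¹ • S.Lg x' - (ht (S.Lg x))⁻¹ • S.Lg x) ≤ 1 / 6) :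
    ht (S.Lg x') ≤ 8 * ht (S.Lg x) := by
  by_contra hcon
  push Not at hcon
  have p : 0 < ht (S.Lg x) := by linarith
  have p' : 0 < ht (S.Lg x') := by linarith
  set t := ht (S.Lg x') / (2 * ht (S.Lg x)) with ht'
  have ht4 : 4 < t := by rw [ht', lt_div_iff₀ (by positivity)]; linarith
  set n := ⌊t⌋₊ with hn
  have hn1 : (n : ℝ) ≤ t := Nat.floor_le (by linarith)
  have hn2 : t < n + 1 := Nat.lt_floor_add_one t
  have hn4 : 4 ≤ n := Nat.le_floor (by exact_mod_cast ht4.le)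
  have e : ht (S.Lg x') = t * (2 * ht (S.Lg x)) := by rw [ht']; field_simp
  have hn4' : (4 : ℝ) ≤ n := by exact_mod_cast hn4
  have hd := ht_diff (a := 2 * n * ht (S.Lg x)) (b := ht (S.Lg x')) _ _ (by positivity)
    (by rw [e]; nlinarith)
    (by rw [ht_smul (inv_nonneg.2 p'.le), inv_mul_cancel₀ p'.ne']) hε
  rw [mul_smul, smul_inv_smul₀ p.ne', smul_inv_smul₀ p'.ne'] at hd
  have hp := pade_ht (S := S) (n := n) (by omega) hx hx'
  have hl := log_two_lt
  set H := ht (S.Lg x) with hH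
  have h3 : S.D * (6 * n * Real.log 2) ≤ H / 25 * (6 * n * 0.6932) := by
    have : S.D ≤ H / 25 := by linarith
    have h0 : 0 ≤ Real.log 2 := Real.log_nonneg (by norm_num)
    gcongr
  rw [e] at hd
  have h4 : t * (2 * H) < (n + 1) * (2 * H) := by gcongr
  -- n H ≤ 2 n H/6 + 2 (n+1) H - 2 n H + 0.16637 n H
  have h5 : (4 : ℝ) * H ≤ n * H := by gcongr
  norm_num at h3 hd
  nlinarith

/-- number of solutions of large height -/
lemma large_count [CharZero K] (hD : 0 < S.D) (V : Submodule ℝ (ι → ℝ × ℝ)) (hV : ∀ ξ ∈ V, Sz ξ)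
    (X : Finset K) (hX : ∀ x ∈ X, S.Sol x) (hXV : ∀ x ∈ X, S.Lg x ∈ V)
    (hs : ∀ x ∈ X, S.D < ht (S.Lg x)) (r : ℕ)
    (hr : Module.finrank ℝ V ≤ r) : X.card ≤ 41 * 20 ^ r := by
  classical
  have hpos : ∀ x ∈ X, 0 < ht (S.Lg x) := fun x hx => hD.trans (hs x hx)
  have hpk := packing_ht V hV X (fun x => (ht (S.Lg x))⁻¹ • S.Lg x)
    (fun x hx => V.smul_mem _ (hXV x hx)) 1 (1 / 18) (by norm_num) (by norm_num)
    (by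
      intro x hx
      rw [ht_smul (inv_nonneg.2 (hpos x hx).le), inv_mul_cancel₀ (hpos x hx).ne']) 41 (by
    intro ξ hξ
    set Y := X.filter fun x => ht ((ht (S.Lg x))⁻¹ • S.Lg x - ξ) < 1 / 18 with hY
    have hYX : ∀ x ∈ Y, x ∈ X := fun x hx => (Finset.mem_filter.1 hx).1
    have hpair : ∀ x ∈ Y, ∀ x' ∈ Y,
        ht ((ht (S.Lg x'))⁻¹ • S.Lg x' - (ht (S.Lg x))⁻¹ • S.Lg x) ≤ 1 / 6 := by
      intro x hx x' hx'
      have a1 := (Finset.mem_filter.1 hx).2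
      have a2 := (Finset.mem_filter.1 hx').2
      have a3 := ht_neg (hV _ (V.sub_mem (V.smul_mem (ht (S.Lg x))⁻¹ (hXV x (hYX x hx))) hξ))
      have a4 := ht_add ((ht (S.Lg x'))⁻¹ • S.Lg x' - ξ) (-((ht (S.Lg x))⁻¹ • S.Lg x - ξ))
      rw [show ((ht (S.Lg x'))⁻¹ • S.Lg x' - ξ) + (-((ht (S.Lg x))⁻¹ • S.Lg x - ξ)) =
        (ht (S.Lg x'))⁻¹ • S.Lg x' - (ht (S.Lg x))⁻¹ • S.Lg x by abel] at a4
      linarith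
    have hgrow : ∀ x ∈ Y, ∀ x' ∈ Y, x ≠ x' → ht (S.Lg x) ≤ ht (S.Lg x') →
        1.14 * ht (S.Lg x) ≤ ht (S.Lg x') := fun x hx x' hx' hne hle =>
      cone_growth (hX _ (hYX x hx)) (hX _ (hYX x' hx')) hne hD.le (hs _ (hYX x hx)) hle
        (hpair x hx x' hx')
    have c1 : (Y.filter fun x => ht (S.Lg x) ≤ 25 * S.D).card ≤ 25 := by
      refine chain_card (fun x => ht (S.Lg x)) 1.14 S.D (25 * S.D) 25 (by norm_num) hD.le ?_ _ ?_ ?_ ?_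
      · have : (25 : ℝ) < 1.14 ^ 25 := by norm_num
        nlinarith
      · intro x hx; exact (hs _ (hYX x (Finset.mem_filter.1 hx).1)).le
      · intro x hx; exact (Finset.mem_filter.1 hx).2
      · intro x hx x' hx'; exact hgrow x (Finset.mem_filter.1 hx).1 x' (Finset.mem_filter.1 hx').1
    have c2 : (Y.filter fun x => ¬ ht (S.Lg x) ≤ 25 * S.D).card ≤ 16 := by
      rcases (Y.filter fun x => ¬ ht (S.Lg x) ≤ 25 * S.D).eq_empty_or_nonempty with h0 | h0
      · rw [h0]; simp
      · obtain ⟨y, hy, hym⟩ := Finset.exists_min_image _ (fun x => ht (S.Lg x)) h0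
        have hyY := (Finset.mem_filter.1 hy).1
        have hy25 := (Finset.mem_filter.1 hy).2
        push Not at hy25
        refine chain_card (fun x => ht (S.Lg x)) 1.14 (ht (S.Lg y)) (8 * ht (S.Lg y)) 16
          (by norm_num) (ht_nonneg _) ?_ _ ?_ ?_ ?_
        · have : (8 : ℝ) < 1.14 ^ 16 := by norm_num
          have := hpos y (hYX y hyY)
          nlinarith
        · intro x hx; exact hym x hx
        · intro x hx
          have hxY := (Finset.mem_filter.1 hx).1
          exact cone_bound (hX _ (hYX y hyY)) (hX _ (hYX x hxY)) hD hy25.le (hpair y hyY x hxY)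
        · intro x hx x' hx'
          exact hgrow x (Finset.mem_filter.1 hx).1 x' (Finset.mem_filter.1 hx').1
    have := Finset.card_filter_add_card_filter_not (s := Y) (fun x => ht (S.Lg x) ≤ 25 * S.D)
    omega)
  have h1 : (X.card : ℝ) * (1 / 18) ^ Module.finrank ℝ V ≤
      (41 * 20 ^ Module.finrank ℝ V) * (1 / 18) ^ Module.finrank ℝ V := by
    refine hpk.trans (le_of_eq ?_)
    push_cast
    rw [mul_assoc, ← mul_pow]
    norm_num
  have h2 := le_of_mul_le_mul_right h1 (by positivity)
  have h3 : (X.card : ℝ) ≤ 41 * 20 ^ r := by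
    refine h2.trans ?_
    gcongr
    norm_num
  exact_mod_cast h3

theorem count [CharZero K] (hD : 0 < S.D) (V : Submodule ℝ (ι → ℝ × ℝ)) (hV : ∀ ξ ∈ V, Sz ξ)
    (X : Finset K) (hX : ∀ x ∈ X, S.Sol x) (hXV : ∀ x ∈ X, S.Lg x ∈ V) (s : ℕ) (hs : 1 ≤ s)
    (hr : Module.finrank ℝ V ≤ 2 * s - 1) : X.card ≤ 3 * 7 ^ (4 * s) := by
  classical
  have c1 : (X.filter fun x => x ^ 2 - x + 1 = 0).card ≤ 2 := by
    set f : Polynomial K := Polynomial.X ^ 2 - Polynomial.X + 1 with hf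
    have hdeg : f.natDegree = 2 := by rw [hf]; compute_degree!
    have hf0 : f ≠ 0 := by intro h; rw [h] at hdeg; simp at hdeg
    have hsub : (X.filter fun x => x ^ 2 - x + 1 = 0) ⊆ f.roots.toFinset := by
      intro x hx
      have := (Finset.mem_filter.1 hx).2
      rw [Multiset.mem_toFinset, Polynomial.mem_roots hf0, Polynomial.IsRoot.def, hf]
      simpa using this
    calc _ ≤ f.roots.toFinset.card := Finset.card_le_card hsub
      _ ≤ f.roots.card := Multiset.toFinset_card_le _
      _ ≤ f.natDegree := Polynomial.card_roots' f
      _ = 2 := hdeg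
  set Y := X.filter fun x => ¬ (x ^ 2 - x + 1 = 0) with hY
  have hYX : ∀ x ∈ Y, x ∈ X := fun x hx => (Finset.mem_filter.1 hx).1
  have c2 := small_count hD V hV (Y.filter fun x => ht (S.Lg x) ≤ S.D)
    (fun x hx => hX x (hYX x (Finset.mem_filter.1 hx).1))
    (fun x hx => hXV x (hYX x (Finset.mem_filter.1 hx).1))
    (fun x hx => (Finset.mem_filter.1 (Finset.mem_filter.1 hx).1).2)
    (fun x hx => (Finset.mem_filter.1 hx).2) _ hr
  have c3 := large_count hD V hV (Y.filter fun x => ¬ ht (S.Lg x) ≤ S.D)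
    (fun x hx => hX x (hYX x (Finset.mem_filter.1 hx).1))
    (fun x hx => hXV x (hYX x (Finset.mem_filter.1 hx).1))
    (fun x hx => not_le.1 (Finset.mem_filter.1 hx).2) _ hr
  have e1 := Finset.card_filter_add_card_filter_not (s := X) (fun x => x ^ 2 - x + 1 = 0)
  rw [← hY] at e1
  have e2 := Finset.card_filter_add_card_filter_not (s := Y) (fun x => ht (S.Lg x) ≤ S.D)
  obtain ⟨k, rfl⟩ : ∃ k, s = k + 1 := ⟨s - 1, by omega⟩
  rw [show 2 * (k + 1) - 1 = 2 * k + 1 by omega] at c2 c3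
  have b1 : 23 ^ (2 * k) ≤ 49 ^ (2 * k) := Nat.pow_le_pow_left (by norm_num) _
  have b2 : 20 ^ (2 * k) ≤ 49 ^ (2 * k) := Nat.pow_le_pow_left (by norm_num) _
  have b3 : 1 ≤ 49 ^ (2 * k) := Nat.one_le_pow _ _ (by norm_num)
  have e3 : 7 ^ (4 * (k + 1)) = 2401 * 49 ^ (2 * k) := by
    rw [show 4 * (k + 1) = 2 * (2 * k) + 4 by ring, pow_add, pow_mul]; norm_num; ring
  rw [e3]
  rw [pow_succ] at c2 c3
  omega

end PlaceSys
end SUnitBound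


namespace SUnitBound

section NF

variable {K : Type*} [Field K] [NumberField K]

noncomputable abbrev fAbv (v : HeightOneSpectrum (𝓞 K)) : AbsoluteValue K ℝ :=
  NumberField.HeightOneSpectrum.adicAbv K v

lemma fAbv_le_one_iff (v : HeightOneSpectrum (𝓞 K)) (x : K) :
    fAbv v x ≤ 1 ↔ v.valuation K x ≤ 1 := by
  have hm := WithZeroMulInt.toNNReal_strictMono
    (NumberField.HeightOneSpectrum.one_lt_absNorm_nnreal v)
  rw [fAbv, NumberField.HeightOneSpectrum.adicAbv_def]
  have h1 : (WithZeroMulInt.toNNReal (NumberField.HeightOneSpectrum.absNorm_ne_zero v)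
    (v.valuation K x)) ≤ 1 ↔ v.valuation K x ≤ 1 := by
    rw [← map_one (WithZeroMulInt.toNNReal (NumberField.HeightOneSpectrum.absNorm_ne_zero v))]
    exact hm.le_iff_le
  rw [← h1]
  norm_cast

lemma fAbv_congr (v : HeightOneSpectrum (𝓞 K)) {x y : K}
    (h : v.valuation K x = v.valuation K y) : fAbv v x = fAbv v y := by
  rw [fAbv, NumberField.HeightOneSpectrum.adicAbv_def, NumberField.HeightOneSpectrum.adicAbv_def, h]

lemma finite_val_ne_one (x : K) (hx : x ≠ 0) :
    {v : HeightOneSpectrum (𝓞 K) | v.valuation K x ≠ 1}.Finite ∧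
    (Function.mulSupport fun v : HeightOneSpectrum (𝓞 K) => fAbv v x).Finite := by
  have h := FinitePlace.hasFiniteMulSupport (K := K) hx
  have h2 : (Function.mulSupport fun v : HeightOneSpectrum (𝓞 K) => fAbv v x).Finite := by
    have := Set.Finite.preimage
      (f := (FinitePlace.equivHeightOneSpectrum (K := K)).symm)
      (FinitePlace.equivHeightOneSpectrum (K := K)).symm.injective.injOn h
    refine this.subset ?_
    intro v hv
    simp only [Set.mem_preimage, Function.mem_mulSupport] at hv ⊢
    rw [FinitePlace.equivHeightOneSpectrum_symm_apply, FinitePlace.norm_embedding]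
    exact hv
  refine ⟨h2.subset ?_, h2⟩
  intro v hv
  simp only [Set.mem_ofPred_eq, Function.mem_mulSupport] at hv ⊢
  intro h1
  apply hv
  apply le_antisymm
  · exact (fAbv_le_one_iff v x).1 h1.le
  · have : fAbv v x⁻¹ ≤ 1 := by rw [map_inv₀, h1]; simp
    have h3 := (fAbv_le_one_iff v x⁻¹).1 this
    rw [map_inv₀] at h3
    exact (inv_le_one₀ (zero_lt_iff.2 (by simpa using hx))).1 h3

lemma prod_ineq (T : Finset (HeightOneSpectrum (𝓞 K))) (x : K) (hx : x ≠ 0)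
    (h : ∀ v ∉ T, v.valuation K x ≤ 1) :
    0 ≤ ∑ w : InfinitePlace K, (w.mult : ℝ) * Real.log (w x)
      + ∑ v : T, Real.log (fAbv v.1 x) := by
  have hp := NumberField.prod_abs_eq_one (K := K) hx
  have he : (∏ᶠ w : FinitePlace K, w x) = ∏ᶠ v : HeightOneSpectrum (𝓞 K), fAbv v x := by
    rw [← finprod_comp_equiv (FinitePlace.equivHeightOneSpectrum (K := K)).symm]
    refine finprod_congr fun v => ?_
    rw [FinitePlace.equivHeightOneSpectrum_symm_apply, FinitePlace.norm_embedding]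
  rw [he] at hp
  have hf := (finite_val_ne_one x hx).2
  rw [finprod_eq_prod_of_mulSupport_subset (s := hf.toFinset ∪ T) _ (by
    intro v hv; simp; left; simpa using hv)] at hp
  have hpos : ∀ v : HeightOneSpectrum (𝓞 K), 0 < fAbv v x := fun v => (fAbv v).pos hx
  have h1 : ∏ v ∈ hf.toFinset ∪ T, fAbv v x ≤ ∏ v ∈ T, fAbv v x := by
    rw [← Finset.sdiff_union_self_eq_union, Finset.prod_union Finset.sdiff_disjoint]
    apply mul_le_of_le_one_left (Finset.prod_nonneg fun v _ => (hpos v).le)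
    apply Finset.prod_le_one (fun v _ => (hpos v).le)
    intro v hv
    exact (fAbv_le_one_iff v x).2 (h v (Finset.mem_sdiff.1 hv).2)
  have hipos : ∀ w : InfinitePlace K, 0 < w x := fun w => w.pos_iff.2 hx
  have h2 : 1 ≤ (∏ w : InfinitePlace K, w x ^ w.mult) * ∏ v ∈ T, fAbv v x := by
    rw [← hp]
    exact mul_le_mul_of_nonneg_left h1 (Finset.prod_nonneg fun w _ => (pow_pos (hipos w) _).le)
  have h3 := Real.log_nonneg h2
  rw [Real.log_mul (Finset.prod_ne_zero_iff.2 fun w _ => (pow_pos (hipos w) _).ne')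
    (Finset.prod_ne_zero_iff.2 fun v _ => (hpos v).ne'), Real.log_prod
    (fun w _ => (pow_pos (hipos w) _).ne'), Real.log_prod (fun v _ => (hpos v).ne')] at h3
  simp only [Real.log_pow] at h3
  rw [Finset.sum_coe_sort T (fun v => Real.log (fAbv v x))]
  exact h3

noncomputable def nfSys (T : Finset (HeightOneSpectrum (𝓞 K))) :
    PlaceSys K (InfinitePlace K ⊕ T) where
  av := Sum.elim (fun w => w.1) (fun v => fAbv v.1)
  mu := Sum.elim (fun w => w.mult) (fun _ => 1)
  ar := Sum.elim (fun w => w.mult) (fun _ => 0)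
  mu_pos := by
    rintro (w | v)
    · simpa using w.mult_pos
    · simp
  ok := by
    rintro (w | v)
    · right
      refine ⟨rfl, w.embedding, fun x => ?_⟩
      exact (InfinitePlace.norm_embedding_eq w x).symm
    · left
      exact ⟨rfl, NumberField.HeightOneSpectrum.isNonarchimedean_adicAbv K v.1⟩
  O := 
    { carrier := {x | ∀ v ∉ T, v.valuation K x ≤ 1}
      mul_mem' := fun {a b} ha hb v hv => by
        rw [map_mul]; exact mul_le_one' (ha v hv) (hb v hv)
      one_mem' := fun v hv => by simp
      add_mem' := fun {a b} ha hb v hv =>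
        (Valuation.map_add _ _ _).trans (max_le (ha v hv) (hb v hv))
      zero_mem' := fun v hv => by simp
      neg_mem' := fun {a} ha v hv => by rw [Valuation.map_neg]; exact ha v hv }
  prod := by
    intro x hx h0
    have := prod_ineq T x h0 hx
    rw [Fintype.sum_sum_type]
    simp only [Sum.elim_inl, Sum.elim_inr, one_mul]
    exact this

theorem nf_count (T : Finset (HeightOneSpectrum (𝓞 K))) (X : Finset K)
    (h0 : ∀ x ∈ X, x ≠ 0) (h1 : ∀ x ∈ X, 1 - x ≠ 0)
    (hx : ∀ v ∉ T, ∀ x ∈ X, ∀ y ∈ X, v.valuation K x = v.valuation K y)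
    (hy : ∀ v ∉ T, ∀ x ∈ X, ∀ y ∈ X, v.valuation K (1 - x) = v.valuation K (1 - y)) :
    X.card ≤ 3 * 7 ^ (4 * (T.card + Fintype.card (InfinitePlace K))) := by
  rcases X.eq_empty_or_nonempty with rfl | ⟨x0, hx0⟩
  · simp
  set A := (finite_val_ne_one x0 (h0 _ hx0)).1.toFinset with hA
  set B := (finite_val_ne_one (1 - x0) (h1 _ hx0)).1.toFinset with hB
  set T' := T ∪ (A ∪ B) with hT'
  let S := nfSys T'
  have hout : ∀ v ∉ T', ∀ x ∈ X, v.valuation K x = 1 ∧ v.valuation K (1 - x) = 1 := by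
    intro v hv x hxX
    simp only [hT', hA, hB, Finset.mem_union, Set.Finite.mem_toFinset, Set.mem_ofPred_eq, not_or,
      not_not] at hv
    exact ⟨(hx v hv.1 x hxX x0 hx0).trans hv.2.1, (hy v hv.1 x hxX x0 hx0).trans hv.2.2⟩
  have hsol : ∀ x ∈ X, S.Sol x := by
    intro x hxX
    refine ⟨h0 x hxX, h1 x hxX, fun v hv => (hout v hv x hxX).1.le, fun v hv => ?_,
      fun v hv => ?_⟩
    · rw [map_inv₀, (hout v hv x hxX).1, inv_one]
    · rw [map_inv₀, (hout v hv x hxX).2, inv_one]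
  have hsz : ∀ x ∈ X, PlaceSys.Sz (S.Lg x) := fun x hxX => (hsol x hxX).sz
  obtain ⟨w0⟩ : Nonempty (InfinitePlace K) := inferInstance
  -- difference space
  let J := {i : InfinitePlace K ⊕ T' // i ≠ Sum.inl w0 ∧ ∀ v : T', i = Sum.inr v → v.1 ∈ T}
  let ext : (J → ℝ × ℝ) →ₗ[ℝ] (InfinitePlace K ⊕ T' → ℝ × ℝ) :=
    { toFun := fun f i => if i = Sum.inl w0 then - ∑ j, f j else
        if h : (i ≠ Sum.inl w0 ∧ ∀ v : T', i = Sum.inr v → v.1 ∈ T) then f ⟨i, h⟩ else 0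
      map_add' := by
        intro f g
        funext i
        simp only [Pi.add_apply, Finset.sum_add_distrib]
        split_ifs
        · rw [neg_add]
        · rfl
        · simp
      map_smul' := by
        intro c f
        funext i
        simp only [Pi.smul_apply, RingHom.id_apply, ← Finset.smul_sum]
        split_ifs
        · rw [smul_neg]
        · rfl
        · simp }
  let V : Submodule ℝ (InfinitePlace K ⊕ T' → ℝ × ℝ) := Submodule.span ℝ (S.Lg '' X)
  have hcomp : ∀ x ∈ X, S.Lg x - S.Lg x0 ∈ LinearMap.range ext := by
    intro x hxX
    refine ⟨fun j => (S.Lg x - S.Lg x0) j.1, ?_⟩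
    have hz : ∀ i, ¬ (∀ v : T', i = Sum.inr v → v.1 ∈ T) → (S.Lg x - S.Lg x0) i = 0 := by
      intro i hi
      push Not at hi
      obtain ⟨v, rfl, hv⟩ := hi
      have e1 := fAbv_congr v.1 (hx v.1 hv x hxX x0 hx0)
      have e2 := fAbv_congr v.1 (hy v.1 hv x hxX x0 hx0)
      have e1' : S.av (Sum.inr v) x = S.av (Sum.inr v) x0 := e1
      have e2' : S.av (Sum.inr v) (1 - x) = S.av (Sum.inr v) (1 - x0) := e2
      simp [PlaceSys.Lg, PlaceSys.lg, e1', e2']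
    have hsum : ∑ i, (S.Lg x - S.Lg x0) i = 0 := by
      have a := hsz x hxX
      have b := hsz x0 hx0
      unfold PlaceSys.Sz at a b
      simp only [Pi.sub_apply, Finset.sum_sub_distrib, a, b, sub_zero]
    funext i
    show (if i = Sum.inl w0 then - ∑ j : J, (S.Lg x - S.Lg x0) j.1 else
        if h : (i ≠ Sum.inl w0 ∧ ∀ v : T', i = Sum.inr v → v.1 ∈ T)
          then (S.Lg x - S.Lg x0) i else 0) = _
    split_ifs with c1 c2
    · subst c1
      have e : ∑ j : J, (S.Lg x - S.Lg x0) j.1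
          = ∑ i ∈ Finset.univ.erase (Sum.inl w0), (S.Lg x - S.Lg x0) i := by
        have : ∑ j : J, (S.Lg x - S.Lg x0) j.1 = ∑ i ∈ Finset.univ.filter
            (fun i : InfinitePlace K ⊕ T' => i ≠ Sum.inl w0 ∧ ∀ v : T', i = Sum.inr v → v.1 ∈ T),
            (S.Lg x - S.Lg x0) i := by
          symm
          apply Finset.sum_subtype
          intro i; simp
        rw [this]
        apply Finset.sum_subset
        · intro i hi; simp at hi ⊢; exact hi.1
        · intro i hi hi2
          simp only [Finset.mem_erase, Finset.mem_univ, and_true] at hi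
          simp only [Finset.mem_filter, Finset.mem_univ, true_and, not_and] at hi2
          exact hz i (hi2 hi)
      rw [e]
      rw [← Finset.add_sum_erase _ _ (Finset.mem_univ (Sum.inl w0))] at hsum
      exact (eq_neg_of_add_eq_zero_left hsum).symm
    · rfl
    · symm
      apply hz
      intro h
      exact c2 ⟨c1, h⟩
  have hVle : V ≤ Submodule.span ℝ {S.Lg x0} ⊔ LinearMap.range ext := by
    rw [Submodule.span_le]
    rintro _ ⟨x, hxX, rfl⟩
    have : S.Lg x = S.Lg x0 + (S.Lg x - S.Lg x0) := by abel
    rw [this]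
    exact Submodule.add_mem_sup (Submodule.mem_span_singleton_self _) (hcomp x hxX)
  have hJ : Fintype.card J ≤ T.card + Fintype.card (InfinitePlace K) - 1 := by
    let e : J → {i : InfinitePlace K ⊕ T // i ≠ Sum.inl w0} := fun j =>
      match j with
      | ⟨Sum.inl w, h⟩ => ⟨Sum.inl w, fun h' => h.1 (by
          have := Sum.inl_injective h'; rw [this])⟩
      | ⟨Sum.inr v, h⟩ => ⟨Sum.inr ⟨v.1, h.2 v rfl⟩, by simp⟩
    have he : Function.Injective e := by
      rintro ⟨i | i, hi⟩ ⟨j | j, hj⟩ hij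
      · simp only [e, Subtype.mk.injEq, Sum.inl.injEq] at hij
        subst hij; rfl
      · simp [e] at hij
      · simp [e] at hij
      · simp only [e, Subtype.mk.injEq, Sum.inr.injEq] at hij
        have := Subtype.ext hij
        subst this; rfl
    refine (Fintype.card_le_of_injective e he).trans ?_
    rw [Fintype.card_subtype_compl]
    simp [add_comm]
  have hrank : Module.finrank ℝ V ≤ 2 * (T.card + Fintype.card (InfinitePlace K)) - 1 := by
    have a1 := Submodule.finrank_mono hVle
    have a2 := Submodule.finrank_add_le_finrank_add_finrank
      (Submodule.span ℝ {S.Lg x0}) (LinearMap.range ext)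
    have a3 : Module.finrank ℝ (Submodule.span ℝ {S.Lg x0}) ≤ 1 := by
      have := finrank_span_le_card (R := ℝ) ({S.Lg x0} : Set (InfinitePlace K ⊕ T' → ℝ × ℝ))
      simpa using this
    have a4 := LinearMap.finrank_range_le ext
    have a5 : Module.finrank ℝ (J → ℝ × ℝ) = 2 * Fintype.card J := by
      rw [Module.finrank_pi_fintype]; simp [mul_comm]
    have a6 : 0 < Fintype.card (InfinitePlace K) := Fintype.card_pos_iff.2 ⟨w0⟩
    omega
  have hcard : 0 < Fintype.card (InfinitePlace K) := Fintype.card_pos_iff.2 ⟨w0⟩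
  refine S.count ?_ V ?_ X hsol ?_ _ (by omega) hrank
  · have hD : S.D = ∑ w : InfinitePlace K, (w.mult : ℝ) := by
      unfold PlaceSys.D
      rw [Fintype.sum_sum_type]
      simp [S, nfSys]
    rw [hD]
    apply Finset.sum_pos
    · intro w _; exact_mod_cast w.mult_pos
    · exact ⟨w0, Finset.mem_univ _⟩
  · intro ξ hξ
    refine Submodule.span_induction (p := fun ξ _ => PlaceSys.Sz ξ) ?_ ?_ ?_ ?_ hξ
    · rintro _ ⟨x, hxX, rfl⟩; exact hsz x hxX
    · simp [PlaceSys.Sz]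
    · intro a b _ _ ha hb
      unfold PlaceSys.Sz at *
      simp only [Pi.add_apply, Finset.sum_add_distrib, ha, hb, add_zero]
    · intro c a _ ha
      unfold PlaceSys.Sz at *
      simp only [Pi.smul_apply, ← Finset.smul_sum, ha, smul_zero]
  · intro x hxX
    exact Submodule.subset_span ⟨x, hxX, rfl⟩

end NF

end SUnitBound


namespace TailBound

/-- wedge product of two plane vectors -/
def wg {A : Type*} [CommRing A] (p q : Fin 2 → A) : A := p 0 * q 1 - p 1 * q 0

lemma wg_map {A B : Type*} [CommRing A] [CommRing B] (h : A →+* B) (p q : Fin 2 → A) :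
    wg (fun i => h (p i)) (fun i => h (q i)) = h (wg p q) := by
  simp [wg]

section rep

variable {K : Type*} [Field K]

/-- `w` is a vector of homogeneous coordinates of `P`. -/
def Rep (w : Fin 2 → K) (P : Projectivization K (Fin 2 → K)) : Prop :=
  ∃ h : w ≠ 0, P = Projectivization.mk K w h

lemma Rep.ne {w : Fin 2 → K} {P} (h : Rep w P) : w ≠ 0 := h.1

lemma rep_rep (P : Projectivization K (Fin 2 → K)) : Rep P.rep P :=
  ⟨P.rep_nonzero, P.mk_rep.symm⟩

lemma Rep.scale {w w' : Fin 2 → K} {P} (h : Rep w P) (h' : Rep w' P) :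
    ∃ c : K, c ≠ 0 ∧ ∀ i, w' i = c * w i := by
  obtain ⟨a, rfl⟩ := h
  obtain ⟨b, hb⟩ := h'
  rw [Projectivization.mk_eq_mk_iff] at hb
  obtain ⟨u, hu⟩ := hb
  refine ⟨(u⁻¹ : Kˣ), by simp, fun i => ?_⟩
  have := congrFun hu i
  simp only [Pi.smul_apply, Units.smul_def, smul_eq_mul] at this
  rw [← this, ← mul_assoc]; simp

lemma Rep.smul {w w' : Fin 2 → K} {P} (h : Rep w P) {c : K} (hc : c ≠ 0)
    (hw : ∀ i, w' i = c * w i) : Rep w' P := by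
  obtain ⟨a, rfl⟩ := h
  have h' : w' ≠ 0 := by
    intro h0
    apply a
    funext i
    have := hw i
    rw [h0] at this
    simpa [hc] using this.symm
  refine ⟨h', ?_⟩
  rw [Projectivization.mk_eq_mk_iff]
  refine ⟨(Units.mk0 c hc)⁻¹, ?_⟩
  funext i
  simp [Units.smul_def, hw i, hc]

lemma Rep.wg_zero {w w' : Fin 2 → K} {P} (h : Rep w P) (h' : Rep w' P) : wg w w' = 0 := by
  obtain ⟨c, -, hc⟩ := h.scale h'
  simp only [wg, hc]; ring

lemma exists_smul_of_wg {w w' : Fin 2 → K} (h : w ≠ 0) (hw : wg w w' = 0) :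
    ∃ c : K, ∀ i, w' i = c * w i := by
  unfold wg at hw
  by_cases h0 : w 0 = 0
  · have h1 : w 1 ≠ 0 := by
      intro h1; apply h; funext i; fin_cases i <;> simp [h0, h1]
    refine ⟨w' 1 / w 1, fun i => ?_⟩
    rw [h0] at hw
    fin_cases i
    · simp only [Fin.zero_eta, h0, mul_zero]
      simpa [h1] using hw
    · simp [h1]
  · refine ⟨w' 0 / w 0, fun i => ?_⟩
    fin_cases i
    · simp [h0]
    · simp only [Fin.mk_one]
      field_simp
      linear_combination hw

lemma Rep.eq_of_wg {w w' : Fin 2 → K} {P P'} (h : Rep w P) (h' : Rep w' P')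
    (hw : wg w w' = 0) : P = P' := by
  obtain ⟨c, hc⟩ := exists_smul_of_wg h.ne hw
  have hc0 : c ≠ 0 := by
    rintro rfl
    apply h'.ne
    funext i; simp [hc i]
  have := h.smul hc0 hc
  obtain ⟨a, e⟩ := this
  obtain ⟨b, e'⟩ := h'
  rw [e, e']

end rep

section Phi

variable {O : Type*} [CommRing O] (F G : MvPolynomial (Fin 2) O)

/-- the polynomial map given by two forms -/
noncomputable def Phi (A : Type*) [CommRing A] [Algebra O A] (w : Fin 2 → A) : Fin 2 → A :=
  ![aeval w F, aeval w G]

lemma Phi_map {A B : Type*} [CommRing A] [Algebra O A] [CommRing B] [Algebra O B]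
    (h : A →ₐ[O] B) (w : Fin 2 → A) :
    Phi F G B (fun i => h (w i)) = fun i => h (Phi F G A w i) := by
  have e : ∀ p : MvPolynomial (Fin 2) O, aeval (fun i => h (w i)) p = h (aeval w p) := by
    intro p
    rw [← AlgHom.comp_apply, MvPolynomial.comp_aeval]
  funext i
  fin_cases i
  · simpa [Phi] using e F
  · simpa [Phi] using e G

lemma Phi_iter_map {A B : Type*} [CommRing A] [Algebra O A] [CommRing B] [Algebra O B]
    (h : A →ₐ[O] B) (n : ℕ) (w : Fin 2 → A) :
    (Phi F G B)^[n] (fun i => h (w i)) = fun i => h ((Phi F G A)^[n] w i) := by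
  induction n generalizing w with
  | zero => rfl
  | succ n ih =>
    rw [Function.iterate_succ_apply, Phi_map, ih, Function.iterate_succ_apply]

lemma aeval_scale {d : ℕ} {F : MvPolynomial (Fin 2) O} (hF : F.IsHomogeneous d)
    {A : Type*} [CommRing A] [Algebra O A] (c : A) (w : Fin 2 → A) :
    aeval (fun i => c * w i) F = c ^ d * aeval w F := by
  rw [MvPolynomial.aeval_def, MvPolynomial.aeval_def, MvPolynomial.eval₂_eq',
    MvPolynomial.eval₂_eq', Finset.mul_sum]
  refine Finset.sum_congr rfl fun m hm => ?_
  have := hF.degree_eq_sum_deg_support hm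
  have h2 : ∏ i, (c * w i) ^ m i = c ^ d * ∏ i, w i ^ m i := by
    simp only [mul_pow, Finset.prod_mul_distrib]
    rw [Finset.prod_pow_eq_pow_sum]
    congr 2
    rw [this, ← Finsupp.degree_eq_sum]
    rfl
  rw [h2]; ring

lemma Phi_scale {d : ℕ} {F G : MvPolynomial (Fin 2) O} (hF : F.IsHomogeneous d)
    (hG : G.IsHomogeneous d)
    {A : Type*} [CommRing A] [Algebra O A] (c : A) (w : Fin 2 → A) :
    Phi F G A (fun i => c * w i) = fun i => c ^ d * Phi F G A w i := by
  funext i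
  fin_cases i
  · simpa [Phi] using aeval_scale hF c w
  · simpa [Phi] using aeval_scale hG c w

end Phi

section prim

variable {O : Type*} [CommRing O]

/-- primitive vectors over a local ring -/
def Prim (p : Fin 2 → O) : Prop := IsUnit (p 0) ∨ IsUnit (p 1)

variable [IsLocalRing O] [IsDomain O] {K : Type*} [Field K] [Algebra O K] [IsFractionRing O K]

variable (O) in
lemma exists_prim [ValuationRing O] (P : Projectivization K (Fin 2 → K)) :
    ∃ p : Fin 2 → O, Prim p ∧ Rep (fun i => algebraMap O K (p i)) P := by
  have hr := rep_rep P
  set x := P.rep 0 with hx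
  set y := P.rep 1 with hy
  by_cases hy0 : y = 0
  · have hx0 : x ≠ 0 := by
      intro h; apply hr.ne; funext i; fin_cases i
      · exact h
      · exact hy0
    refine ⟨![1, 0], Or.inl (by simp), hr.smul (c := x⁻¹) (by simpa using hx0) ?_⟩
    intro i; fin_cases i
    · simp [← hx, hx0]
    · simp [← hy, hy0]
  by_cases hx0 : x = 0
  · refine ⟨![0, 1], Or.inr (by simp), hr.smul (c := y⁻¹) (by simpa using hy0) ?_⟩
    intro i; fin_cases i
    · simp [← hx, hx0]
    · simp [← hy, hy0]
  rcases ValuationRing.isInteger_or_isInteger O (x / y) with ⟨a, ha⟩ | ⟨a, ha⟩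
  · refine ⟨![a, 1], Or.inr (by simp), hr.smul (c := y⁻¹) (by simpa using hy0) ?_⟩
    intro i; fin_cases i
    · simp [← hx, ha]; field_simp
    · simp [← hy, hy0]
  · refine ⟨![1, a], Or.inl (by simp), hr.smul (c := x⁻¹) (by simpa using hx0) ?_⟩
    intro i; fin_cases i
    · simp [← hx, hx0]
    · simp [← hy, ha]; field_simp

lemma prim_unit {p q : Fin 2 → O} (hp : Prim p) (hq : Prim q) (h : wg p q = 0) :
    ∃ u : O, IsUnit u ∧ ∀ i, q i = u * p i := by
  unfold wg at h
  rcases hp with hp | hp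
  · obtain ⟨v, hv⟩ := hp.exists_right_inv
    have e1 : q 1 = (q 0 * v) * p 1 := by linear_combination v * h - q 1 * hv
    have e0 : q 0 = (q 0 * v) * p 0 := by linear_combination -q 0 * hv
    refine ⟨q 0 * v, ?_, ?_⟩
    · rcases hq with hq | hq
      · rw [e0] at hq; exact isUnit_of_mul_isUnit_left hq
      · rw [e1] at hq; exact isUnit_of_mul_isUnit_left hq
    · intro i; fin_cases i
      · exact e0
      · exact e1
  · obtain ⟨v, hv⟩ := hp.exists_right_inv
    have e1 : q 1 = (q 1 * v) * p 1 := by linear_combination -q 1 * hv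
    have e0 : q 0 = (q 1 * v) * p 0 := by linear_combination -v * h - q 0 * hv
    refine ⟨q 1 * v, ?_, ?_⟩
    · rcases hq with hq | hq
      · rw [e0] at hq; exact isUnit_of_mul_isUnit_left hq
      · rw [e1] at hq; exact isUnit_of_mul_isUnit_left hq
    · intro i; fin_cases i
      · exact e0
      · exact e1

lemma exists_compl {p : Fin 2 → O} (hp : Prim p) : ∃ p' : Fin 2 → O, wg p p' = 1 := by
  rcases hp with hp | hp
  · obtain ⟨v, hv⟩ := hp.exists_right_inv
    exact ⟨![0, v], by simp [wg, hv]⟩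
  · obtain ⟨v, hv⟩ := hp.exists_right_inv
    exact ⟨![-v, 0], by simp [wg, hv]⟩

/-- coordinates with respect to a unimodular basis -/
lemma coords {p p' : Fin 2 → O} (h : wg p p' = 1) (q : Fin 2 → O) (i : Fin 2) :
    q i = wg q p' * p i + wg p q * p' i := by
  unfold wg at *
  fin_cases i
  · simp only [Fin.zero_eta]; linear_combination -q 0 * h
  · simp only [Fin.mk_one]; linear_combination -q 1 * h

/-- If `q` is primitive and congruent to `p` then `q = γ (p + s p')`. -/
lemma chart {p p' q : Fin 2 → O} (h : wg p p' = 1) (hq : Prim q) (hn : ¬ IsUnit (wg p q)) :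
    ∃ γ s : O, IsUnit γ ∧ ¬ IsUnit s ∧ wg p q = γ * s ∧ ∀ i, q i = γ * (p i + s * p' i) := by
  have hγ : IsUnit (wg q p') := by
    by_contra hγ
    have hm : ∀ i, q i ∈ IsLocalRing.maximalIdeal O := by
      intro i
      rw [coords h q i]
      exact Ideal.add_mem _ (Ideal.mul_mem_right _ _ hγ) (Ideal.mul_mem_right _ _ hn)
    rcases hq with hq | hq
    · exact hm 0 hq
    · exact hm 1 hq
  obtain ⟨v, hv⟩ := hγ.exists_right_inv
  refine ⟨wg q p', wg p q * v, hγ, fun hu => hn (isUnit_of_mul_isUnit_left hu), ?_, ?_⟩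
  · linear_combination -wg p q * hv
  · intro i
    rw [coords h q i]
    linear_combination -wg p q * p' i * hv

/-- `P` and `Q` are distinct modulo the maximal ideal. -/
def Cop (O : Type*) [CommRing O] {K : Type*} [Field K] [Algebra O K]
    (P Q : Projectivization K (Fin 2 → K)) : Prop :=
  ∃ p q : Fin 2 → O, Rep (fun i => algebraMap O K (p i)) P ∧
    Rep (fun i => algebraMap O K (q i)) Q ∧ IsUnit (wg p q)

end prim

end TailBound


namespace TailBound

section dyn

variable {O : Type*} [CommRing O] [IsDomain O] [IsLocalRing O] [ValuationRing O]
  {K : Type*} [Field K] [Algebra O K] [IsFractionRing O K]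
  {F G : MvPolynomial (Fin 2) O} {d : ℕ}

/-- criticality expressed with dual numbers -/
def Crit (F G : MvPolynomial (Fin 2) O) (C : Projectivization K (Fin 2 → K)) : Prop :=
  ∃ a : Fin 2 → K, Rep a C ∧ ∀ u : Fin 2 → DualNumber K,
    wg (fun i => algebraMap K (DualNumber K) (a i)) u ^ 2 = 0 →
    wg (fun i => algebraMap K (DualNumber K) (Phi F G K a i)) (Phi F G (DualNumber K) u) = 0

lemma rep_iter {f : Projectivization K (Fin 2 → K) → Projectivization K (Fin 2 → K)}
    (hrep : ∀ w P, Rep w P → Rep (Phi F G K w) (f P)) (n : ℕ) {w P} (h : Rep w P) :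
    Rep ((Phi F G K)^[n] w) (f^[n] P) := by
  induction n generalizing w P with
  | zero => exact h
  | succ n ih =>
    rw [Function.iterate_succ_apply, Function.iterate_succ_apply]
    exact ih (hrep _ _ h)

lemma prim_iter (hprim : ∀ p : Fin 2 → O, Prim p → Prim (Phi F G O p)) (n : ℕ) {p : Fin 2 → O}
    (h : Prim p) : Prim ((Phi F G O)^[n] p) := by
  induction n generalizing p with
  | zero => exact h
  | succ n ih =>
    rw [Function.iterate_succ_apply]
    exact ih (hprim _ h)

/-- a vector over the dual numbers proportional to a constant vector stays so -/
lemma par_iter (hF : F.IsHomogeneous d) (hG : G.IsHomogeneous d) (n : ℕ)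
    {u : Fin 2 → DualNumber K}
    (h : ∃ (c : DualNumber K) (s : Fin 2 → K), ∀ i, u i = c * algebraMap K _ (s i)) :
    ∃ (c : DualNumber K) (s : Fin 2 → K),
      ∀ i, (Phi F G (DualNumber K))^[n] u i = c * algebraMap K _ (s i) := by
  induction n generalizing u with
  | zero => exact h
  | succ n ih =>
    rw [Function.iterate_succ_apply]
    apply ih
    obtain ⟨c, s, hs⟩ := h
    refine ⟨c ^ d, Phi F G K s, fun i => ?_⟩
    have : u = fun i => c * algebraMap K (DualNumber K) (s i) := funext hs
    rw [this, Phi_scale hF hG]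
    have e := Phi_map F G (IsScalarTower.toAlgHom O K (DualNumber K)) s
    exact congrArg (c ^ d * ·) (congrFun e i)

lemma fst_iter (n : ℕ) (u : Fin 2 → DualNumber K) (i : Fin 2) :
    ((Phi F G (DualNumber K))^[n] u i).fst = (Phi F G K)^[n] (fun i => (u i).fst) i := by
  have e := Phi_iter_map F G (TrivSqZeroExt.fstHom O K K) n u
  exact (congrFun e i).symm

/-- along a critical orbit the derivative vanishes -/
lemma crit_wg (hF : F.IsHomogeneous d) (hG : G.IsHomogeneous d)
    {f : Projectivization K (Fin 2 → K) → Projectivization K (Fin 2 → K)}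
    (hrep : ∀ w P, Rep w P → Rep (Phi F G K w) (f P)) {N k : ℕ} (hk : k < N)
    {R R' : Projectivization K (Fin 2 → K)} (hC : Crit F G (f^[k] R))
    {r : Fin 2 → K} (hr : Rep r R') (hN : f^[N] R = R')
    (w : Fin 2 → DualNumber K) (hw : Rep (fun i => (w i).fst) R) :
    wg (fun i => algebraMap K (DualNumber K) (r i)) ((Phi F G (DualNumber K))^[N] w) = 0 := by
  obtain ⟨a, ha, hcr⟩ := hC
  set u := (Phi F G (DualNumber K))^[k] w with hu
  have hfst : Rep (fun i => (u i).fst) (f^[k] R) := by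
    have := rep_iter hrep k hw
    have e : (fun i => (u i).fst) = (Phi F G K)^[k] (fun i => (w i).fst) := by
      funext i; exact fst_iter k w i
    rw [e]; exact this
  have h1 := hcr u (by
    have : (wg (fun i => algebraMap K (DualNumber K) (a i)) u).fst = 0 := by
      have := ha.wg_zero hfst
      simpa [wg, TrivSqZeroExt.algebraMap_eq_inl] using this
    rw [pow_two]
    ext <;> simp [this])
  have hs := hrep _ _ ha
  set s := Phi F G K a with hsdef
  have hpar : ∃ (c : DualNumber K) (s : Fin 2 → K),
      ∀ i, Phi F G (DualNumber K) u i = c * algebraMap K _ (s i) := by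
    set y := Phi F G (DualNumber K) u with hy
    have h1' : algebraMap K (DualNumber K) (s 0) * y 1 - algebraMap K (DualNumber K) (s 1) * y 0
      = 0 := h1
    by_cases h0 : s 0 = 0
    · have hs1 : s 1 ≠ 0 := by
        intro h1; apply hs.ne; funext i; fin_cases i <;> simp [h0, h1]
      have e : algebraMap K (DualNumber K) (s 1)⁻¹ * algebraMap K (DualNumber K) (s 1) = 1 := by
        rw [← map_mul, inv_mul_cancel₀ hs1, map_one]
      refine ⟨algebraMap K (DualNumber K) (s 1)⁻¹ * y 1, s, fun i => ?_⟩
      rw [h0, map_zero, zero_mul, zero_sub, neg_eq_zero] at h1'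
      fin_cases i
      · simp only [Fin.zero_eta, h0, map_zero, mul_zero]
        calc y 0 = algebraMap K (DualNumber K) (s 1)⁻¹ * (algebraMap K (DualNumber K) (s 1) * y 0)
              := by rw [← mul_assoc, e, one_mul]
          _ = 0 := by rw [h1', mul_zero]
      · simp only [Fin.mk_one]
        linear_combination -y 1 * e
    · have e : algebraMap K (DualNumber K) (s 0)⁻¹ * algebraMap K (DualNumber K) (s 0) = 1 := by
        rw [← map_mul, inv_mul_cancel₀ h0, map_one]
      refine ⟨algebraMap K (DualNumber K) (s 0)⁻¹ * y 0, s, fun i => ?_⟩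
      fin_cases i
      · simp only [Fin.zero_eta]
        linear_combination -y 0 * e
      · simp only [Fin.mk_one]
        linear_combination -y 1 * e + algebraMap K (DualNumber K) (s 0)⁻¹ * h1'
  obtain ⟨n, rfl⟩ : ∃ n, N = n + (k + 1) := ⟨N - (k + 1), by omega⟩
  obtain ⟨c, t, ht⟩ := par_iter hF hG n hpar
  have hiter : (Phi F G (DualNumber K))^[n + (k + 1)] w
      = (Phi F G (DualNumber K))^[n] (Phi F G (DualNumber K) u) := by
    rw [Function.iterate_add_apply, Function.iterate_succ_apply', ← hu]
  rw [← hiter] at ht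
  have hfN : Rep (fun i => c.fst * t i) R' := by
    have := rep_iter hrep (n + (k + 1)) hw
    rw [hN] at this
    have e : (fun i => c.fst * t i) = (Phi F G K)^[n + (k + 1)] (fun i => (w i).fst) := by
      funext i
      rw [← fst_iter, ht i]
      simp [TrivSqZeroExt.algebraMap_eq_inl]
    rw [e]; exact this
  have hc : c.fst ≠ 0 := by
    intro h; apply hfN.ne; funext i; simp [h]
  have hwg : wg r t = 0 := by
    have := hr.wg_zero hfN
    have h2 : c.fst * wg r t = 0 := by rw [← this]; simp only [wg]; ring
    exact (mul_eq_zero.1 h2).resolve_left hc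
  have : wg (fun i => algebraMap K (DualNumber K) (r i))
      ((Phi F G (DualNumber K))^[n + (k + 1)] w) = c * algebraMap K (DualNumber K) (wg r t) := by
    simp only [wg, ht, map_sub, map_mul]; ring
  rw [this, hwg, map_zero, mul_zero]

theorem local_dyn (hF : F.IsHomogeneous d) (hG : G.IsHomogeneous d)
    (hprim : ∀ p : Fin 2 → O, Prim p → Prim (Phi F G O p))
    {f : Projectivization K (Fin 2 → K) → Projectivization K (Fin 2 → K)}
    (hrep : ∀ w P, Rep w P → Rep (Phi F G K w) (f P)) {N : ℕ}
    {P Q R : Projectivization K (Fin 2 → K)} (hP : f^[N] P = P) (hR : f^[N] R = R)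
    (hQ : f^[N] Q = R) (hPR : P ≠ R)
    (h : Q ≠ R ∨ (Q = R ∧ ∃ k < N, Crit F G (f^[k] R))) : Cop O P Q := by
  obtain ⟨p, hp, hpP⟩ := exists_prim O P
  obtain ⟨q, hq, hqQ⟩ := exists_prim O Q
  obtain ⟨r, hr, hrR⟩ := exists_prim O R
  by_contra hcop
  have hpq : ¬ IsUnit (wg p q) := fun hu => hcop ⟨p, q, hpP, hqQ, hu⟩
  have hinj : Function.Injective (algebraMap O K) := IsFractionRing.injective O K
  -- iterates over O compared with iterates over K
  have hOK : ∀ x : Fin 2 → O, (Phi F G K)^[N] (fun i => algebraMap O K (x i))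
      = fun i => algebraMap O K ((Phi F G O)^[N] x i) := fun x =>
    Phi_iter_map F G (Algebra.ofId O K) N x
  have hrepO : ∀ (x : Fin 2 → O) X, Rep (fun i => algebraMap O K (x i)) X →
      Rep (fun i => algebraMap O K ((Phi F G O)^[N] x i)) (f^[N] X) := by
    intro x X hx
    rw [← hOK]; exact rep_iter hrep N hx
  have wg0 : ∀ (x y : Fin 2 → O) X, Rep (fun i => algebraMap O K (x i)) X →
      Rep (fun i => algebraMap O K (y i)) X → wg x y = 0 := by
    intro x y X hx hy
    apply hinj
    rw [map_zero, ← wg_map]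
    exact hx.wg_zero hy
  obtain ⟨p', hp'⟩ := exists_compl hp
  obtain ⟨β, b, hβ, hb, hβb, hqb⟩ := chart hp' hq hpq
  -- Φ^N p = unit * p
  obtain ⟨u, hu, hup⟩ := prim_unit hp (prim_iter hprim N hp)
    (wg0 _ _ P hpP (by have := hrepO p P hpP; rwa [hP] at this))
  -- polynomial curve
  let cur : Fin 2 → Polynomial O := fun i =>
    Polynomial.C (p i) + Polynomial.X * Polynomial.C (p' i)
  let it := (Phi F G (Polynomial O))^[N] cur
  have hev : ∀ t : O, ∀ i, Polynomial.eval t (it i)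
      = (Phi F G O)^[N] (fun i => p i + t * p' i) i := by
    intro t i
    have e := Phi_iter_map F G (Polynomial.aeval t : Polynomial O →ₐ[O] O) N cur
    have e2 := congrFun e i
    simp only [Polynomial.coe_aeval_eq_eval, cur, Polynomial.eval_add, Polynomial.eval_C,
      Polynomial.eval_mul, Polynomial.eval_X] at e2
    exact e2.symm
  have hev0 : ∀ i, Polynomial.eval 0 (it i) = u * p i := by
    intro i
    rw [hev, ← hup]; simp
  have hmul : ∀ {γ : O} (hγ : IsUnit γ) {x y : Fin 2 → O} {X}, (∀ i, x i = γ * y i) →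
      Rep (fun i => algebraMap O K (x i)) X → Rep (fun i => algebraMap O K (y i)) X := by
    intro γ hγ x y X hxy hx
    refine hx.smul (c := (algebraMap O K γ)⁻¹) ?_ ?_
    · apply inv_ne_zero
      rw [Ne, map_eq_zero_iff _ hinj]
      exact hγ.ne_zero
    · intro i
      have : algebraMap O K γ ≠ 0 := by
        rw [Ne, map_eq_zero_iff _ hinj]
        exact hγ.ne_zero
      rw [hxy i, map_mul]
      field_simp
  have hqb' : Rep (fun i => algebraMap O K (p i + b * p' i)) Q := hmul hβ hqb hqQ
  have hprimqb : Prim (fun i => p i + b * p' i) := by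
    rcases hq with hq | hq
    · rw [hqb] at hq; exact Or.inl (isUnit_of_mul_isUnit_right hq)
    · rw [hqb] at hq; exact Or.inr (isUnit_of_mul_isUnit_right hq)
  have hevb : Rep (fun i => algebraMap O K (Polynomial.eval b (it i))) R := by
    have := hrepO _ _ hqb'
    rw [hQ] at this
    simpa only [hev] using this
  obtain ⟨u', hu', hu'r⟩ := prim_unit hr (prim_iter hprim N hprimqb)
    (wg0 _ _ R hrR (by simpa only [hev] using hevb))
  -- R congruent to P
  have hpr : ¬ IsUnit (wg p r) := by
    have hd : ∀ i, ∃ z, Polynomial.eval b (it i) = u * p i + b * z := by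
      intro i
      obtain ⟨z, hz⟩ := Polynomial.sub_dvd_eval_sub b 0 (it i)
      refine ⟨z, ?_⟩
      rw [hev0, sub_zero] at hz
      linear_combination hz
    choose z hz using hd
    have e : u' * wg p r = b * wg p z := by
      have e0 := hu'r 0
      have e1 := hu'r 1
      rw [← hev, hz] at e0 e1
      unfold wg
      linear_combination p 1 * e0 - p 0 * e1
    intro hun
    have := hu'.mul hun
    rw [e] at this
    exact hb (isUnit_of_mul_isUnit_left this)
  obtain ⟨γ, c, hγ, hc, hγc, hrc⟩ := chart hp' hr hpr
  have hrc' : Rep (fun i => algebraMap O K (p i + c * p' i)) R := hmul hγ hrc hrR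
  let L : Polynomial O := Polynomial.C (r 0) * it 1 - Polynomial.C (r 1) * it 0
  have hLev : ∀ t, Polynomial.eval t L = wg r (fun i => Polynomial.eval t (it i)) := by
    intro t; simp [L, wg]
  have hLc : Polynomial.eval c L = 0 := by
    rw [hLev]
    apply wg0 _ _ R hrR
    have := hrepO _ _ hrc'
    rw [hR] at this
    simpa only [hev] using this
  have hLb : Polynomial.eval b L = 0 := by
    rw [hLev]
    exact wg0 _ _ R hrR hevb
  obtain ⟨M, hM⟩ := Polynomial.dvd_iff_isRoot.2 hLc
  have hMb : Polynomial.eval b M = 0 := by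
    rcases h with hQR | ⟨hQR, k, hk, hCr⟩
    · have hbc : b - c ≠ 0 := by
        intro hbc
        have : b = c := sub_eq_zero.1 hbc
        apply hQR
        rw [this] at hqb'
        exact hqb'.eq_of_wg hrc' (by unfold wg; ring)
      have := hLb
      rw [hM] at this
      simp only [Polynomial.eval_mul, Polynomial.eval_sub, Polynomial.eval_X, Polynomial.eval_C]
        at this
      exact (mul_eq_zero.1 this).resolve_left hbc
    · subst hQR
      have hbc : b = c := by
        have := wg0 _ _ Q hqb' hrc'
        have h2 : wg (fun i => p i + b * p' i) (fun i => p i + c * p' i) = (c - b) * wg p p' := by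
          unfold wg; ring
        rw [h2, hp', mul_one] at this
        exact (sub_eq_zero.1 this).symm
      subst hbc
      let θ : Polynomial O →ₐ[O] DualNumber K :=
        Polynomial.aeval (algebraMap K (DualNumber K) (algebraMap O K b) + DualNumber.eps)
      have hθC : ∀ x : O, θ (Polynomial.C x) = algebraMap K (DualNumber K) (algebraMap O K x) := by
        intro x
        simp only [θ, Polynomial.aeval_C]
        rw [← IsScalarTower.algebraMap_apply]
      have hfst : ∀ g : Polynomial O, (θ g).fst = algebraMap O K (Polynomial.eval b g) := by
        intro g
        have : ((TrivSqZeroExt.fstHom O K K).comp θ) = (Algebra.ofId O K).comp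
            (Polynomial.aeval b : Polynomial O →ₐ[O] O) := by
          ext
          simp [θ, Algebra.ofId_apply, TrivSqZeroExt.algebraMap_eq_inl]
        have h2 := DFunLike.congr_fun this g
        simpa [Algebra.ofId_apply] using h2
      have hw := crit_wg hF hG hrep hk hCr hrR hR (fun i => θ (cur i)) (by
        have e : (fun i => (θ (cur i)).fst) = fun i => algebraMap O K (p i + b * p' i) := by
          funext i; rw [hfst]; simp [cur]; ring
        rw [e]; exact hrc')
      have hθL : θ L = 0 := by
        rw [Phi_iter_map F G θ N cur] at hw
        rw [← hw]
        simp only [L, wg, map_sub, map_mul, hθC]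
        rfl
      rw [hM] at hθL
      have hθe : θ (Polynomial.X - Polynomial.C b) = DualNumber.eps := by
        rw [map_sub, hθC]; simp [θ]
      rw [map_mul, hθe] at hθL
      have h3 := congrArg TrivSqZeroExt.snd hθL
      have h4 : (θ M).fst = 0 := by simpa using h3
      rw [hfst] at h4
      exact (map_eq_zero_iff _ hinj).1 h4
  obtain ⟨M', hM'⟩ := Polynomial.dvd_iff_isRoot.2 hMb
  have h0 : Polynomial.eval 0 L = c * b * Polynomial.eval 0 M' := by
    rw [hM, hM']; simp
    ring
  have h0' : Polynomial.eval 0 L = - (u * γ * c) := by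
    rw [hLev]
    have : wg r (fun i => Polynomial.eval 0 (it i)) = - (u * wg p r) := by
      simp only [wg, hev0]; ring
    rw [this, hγc]; ring
  have hc0 : c ≠ 0 := by
    rintro rfl
    apply hPR
    exact hpP.eq_of_wg hrc' (by simp [wg]; ring)
  have hfin : u * γ = b * (- Polynomial.eval 0 M') := by
    apply mul_left_cancel₀ hc0
    linear_combination h0' - h0
  have := hu.mul hγ
  rw [hfin] at this
  exact hb (isUnit_of_mul_isUnit_left this)

end dyn

end TailBound


namespace TailBound

section bridge

variable {K : Type*} [Field K] [NumberField K] {d : ℕ}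

/-- the value of `φ` on homogeneous coordinates -/
lemma rep_toFun (φ : P1Map K d) {w : Fin 2 → K} {P : P1 K} (h : Rep w P) :
    Rep ![eval w φ.F, eval w φ.G] (φ.toFun P) := by
  obtain ⟨hw, rfl⟩ := h
  have hv : w = ![w 0, w 1] := by funext i; fin_cases i <;> rfl
  have hne : ![eval w φ.F, eval w φ.G] ≠ 0 := by
    intro h0
    have e0 : eval w φ.F = 0 := by simpa using congrFun h0 0
    have e1 : eval w φ.G = 0 := by simpa using congrFun h0 1
    have key : ∀ p : MvPolynomial (Fin 2) K, eval w p = 0 →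
        aeval ![algebraMap K (AlgebraicClosure K) (w 0),
          algebraMap K (AlgebraicClosure K) (w 1)] p = 0 := by
      intro p hp
      have : (![algebraMap K (AlgebraicClosure K) (w 0),
          algebraMap K (AlgebraicClosure K) (w 1)] : Fin 2 → AlgebraicClosure K)
          = fun i => algebraMap K (AlgebraicClosure K) (w i) := by
        funext i; fin_cases i <;> rfl
      rw [this]
      have e2 := MvPolynomial.aeval_algebraMap_apply (AlgebraicClosure K) w p
      have e3 : aeval w p = eval w p := by rw [MvPolynomial.aeval_eq_eval]; 
      have e4 : (fun i => algebraMap K (AlgebraicClosure K) (w i))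
        = (algebraMap K (AlgebraicClosure K)) ∘ w := rfl
      rw [e4, e2, e3, hp, map_zero]
    obtain ⟨a, b⟩ := φ.coprime _ _ (key _ e0) (key _ e1)
    apply hw
    funext i; fin_cases i
    · simpa using a
    · simpa using b
  refine ⟨hne, ?_⟩
  have hw' : ![w 0, w 1] ≠ 0 := by rw [← hv]; exact hw
  have hne' : ![eval ![w 0, w 1] φ.F, eval ![w 0, w 1] φ.G] ≠ 0 := by rw [← hv]; exact hne
  have := φ.compat (w 0) (w 1) hw' hne'
  simp only [← hv] at this
  exact this

/-- Local statement at a place of good reduction. -/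
theorem good_dyn (φ : P1Map K d) (v : HeightOneSpectrum (𝓞 K)) (hg : GoodReductionAt φ v) {N : ℕ}
    {P Q R : P1 K} (hP : φ.toFun^[N] P = P) (hR : φ.toFun^[N] R = R)
    (hQ : φ.toFun^[N] Q = R) (hPR : P ≠ R)
    (h : Q ≠ R ∨ (Q = R ∧ ∃ k < N, IsCriticalPt φ (φ.toFun^[k] R))) :
    Cop (v.valuation (K := K)).valuationSubring P Q := by
  unfold GoodReductionAt at hg
  set O := (v.valuation (K := K)).valuationSubring with hO
  obtain ⟨c, hc, F₀, G₀, hF, hG, -, hres⟩ := hg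
  have hinj : Function.Injective O.subtype := Subtype.val_injective
  have hF₀ : F₀.IsHomogeneous d := by
    apply IsHomogeneous.of_map (f := O.subtype) hinj
    rw [hF]; exact φ.homF.C_mul c
  have hG₀ : G₀.IsHomogeneous d := by
    apply IsHomogeneous.of_map (f := O.subtype) hinj
    rw [hG]; exact φ.homG.C_mul c
  have hPhi : ∀ (A : Type _) [CommRing A] [Algebra K A] [Algebra O A] [IsScalarTower O K A]
      (w : Fin 2 → A) i, Phi F₀ G₀ A w i
        = algebraMap K A c * ![aeval w φ.F, aeval w φ.G] i := by
    intro A _ _ _ _ w i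
    have key : ∀ (p : MvPolynomial (Fin 2) O) (q : MvPolynomial (Fin 2) K),
        MvPolynomial.map O.subtype p = C c * q → aeval w p = algebraMap K A c * aeval w q := by
      intro p q hpq
      have e := MvPolynomial.aeval_map_algebraMap K w p
      have e1 : MvPolynomial.map (algebraMap O K) p = C c * q := hpq
      rw [← e, e1, map_mul, MvPolynomial.aeval_C]
    fin_cases i
    · simpa [Phi] using key _ _ hF
    · simpa [Phi] using key _ _ hG
  refine local_dyn (F := F₀) (G := G₀) hF₀ hG₀ ?_ (f := φ.toFun) ?_ hP hR hQ hPR ?_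
  · intro p hp
    by_contra hcon
    unfold Prim at hcon
    push Not at hcon
    let k := IsLocalRing.ResidueField O
    let ρ : O →+* AlgebraicClosure k :=
      (algebraMap k (AlgebraicClosure k)).comp (IsLocalRing.residue O)
    have hρ : ∀ x, ρ x = 0 ↔ ¬ IsUnit x := by
      intro x
      show algebraMap k (AlgebraicClosure k) (IsLocalRing.residue O x) = 0 ↔ _
      rw [map_eq_zero_iff _ (algebraMap k (AlgebraicClosure k)).injective,
        IsLocalRing.residue_eq_zero_iff]
      rfl
    have hev : ∀ q : MvPolynomial (Fin 2) O, ¬ IsUnit (aeval p q) →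
        eval ![ρ (p 0), ρ (p 1)] (MvPolynomial.map ρ q) = 0 := by
      intro q hq
      have hvec : (![ρ (p 0), ρ (p 1)] : Fin 2 → AlgebraicClosure k) = ρ ∘ p := by
        funext i; fin_cases i <;> rfl
      rw [hvec, MvPolynomial.eval_map, ← MvPolynomial.eval₂_comp]
      exact (hρ _).2 hq
    obtain ⟨a, b⟩ := hres (ρ (p 0)) (ρ (p 1)) (hev _ hcon.1) (hev _ hcon.2)
    rcases hp with hp | hp
    · exact (hρ _).1 a hp
    · exact (hρ _).1 b hp
  · intro w P hw
    refine (rep_toFun φ hw).smul hc fun i => ?_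
    rw [hPhi K w i]
    simp [MvPolynomial.aeval_eq_eval]
  · rcases h with h | ⟨h, k, hk, hcr⟩
    · exact Or.inl h
    · refine Or.inr ⟨h, k, hk, ?_⟩
      obtain ⟨a, b, hab, hP, hdvd⟩ := hcr
      refine ⟨![a, b], ⟨hab, hP⟩, fun u hu => ?_⟩
      obtain ⟨q, hq⟩ := hdvd
      have hq' := congrArg (aeval u) hq
      simp only [map_sub, map_mul, map_pow, MvPolynomial.aeval_C, MvPolynomial.aeval_X] at hq'
      have hu' : (algebraMap K (DualNumber K) b * u 0 - algebraMap K (DualNumber K) a * u 1) ^ 2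
          = 0 := by
        rw [← hu]; simp [wg]; ring
      rw [hu', zero_mul] at hq'
      simp only [wg, hPhi]
      simp only [Matrix.cons_val_zero, Matrix.cons_val_one, MvPolynomial.aeval_eq_eval, map_mul,
        Algebra.algebraMap_self, RingHom.id_apply]
      linear_combination - (algebraMap K (DualNumber K) c) ^ 2 * hq'

end bridge

end TailBound


namespace TailBound

section final

variable {K : Type*} [Field K] [NumberField K] {d : ℕ}

lemma cop_val (v : HeightOneSpectrum (𝓞 K)) {P Q : P1 K}
    (h : Cop (v.valuation (K := K)).valuationSubring P Q) {p q : Fin 2 → K}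
    (hp : Rep p P) (hq : Rep q Q) :
    v.valuation K (wg p q) = max (v.valuation K (p 0)) (v.valuation K (p 1)) *
      max (v.valuation K (q 0)) (v.valuation K (q 1)) := by
  set O := (v.valuation (K := K)).valuationSubring with hO
  obtain ⟨p0, q0, hp0, hq0, hu⟩ := h
  obtain ⟨a, ha, hpa⟩ := hp0.scale hp
  obtain ⟨b, hb, hqb⟩ := hq0.scale hq
  have hle : ∀ x : O, v.valuation K (algebraMap O K x) ≤ 1 := fun x => x.2
  have hone : v.valuation K (algebraMap O K (wg p0 q0)) = 1 :=
    (Valuation.valuationSubring.integers (v.valuation K)).isUnit_iff_valuation_eq_one.1 hu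
  have key : ∀ x y z w : K, v.valuation K x ≤ 1 → v.valuation K y ≤ 1 → v.valuation K z ≤ 1 →
      v.valuation K w ≤ 1 → v.valuation K (x * w - y * z) = 1 →
      max (v.valuation K x) (v.valuation K y) = 1 := by
    intro x y z w hx hy hz hw h1
    apply le_antisymm (max_le hx hy)
    rw [← h1]
    refine (Valuation.map_sub _ _ _).trans (max_le_max ?_ ?_)
    · rw [map_mul]; exact mul_le_of_le_one_right' hw
    · rw [map_mul]; exact mul_le_of_le_one_right' hz
  have e1 : algebraMap O K (wg p0 q0) = algebraMap O K (p0 0) * algebraMap O K (q0 1)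
      - algebraMap O K (p0 1) * algebraMap O K (q0 0) := by simp [wg]
  rw [e1] at hone
  have m1 := key _ _ _ _ (hle (p0 0)) (hle (p0 1)) (hle (q0 0)) (hle (q0 1)) hone
  have m2 := key (algebraMap O K (q0 0)) (algebraMap O K (q0 1)) (algebraMap O K (p0 0))
    (algebraMap O K (p0 1)) (hle (q0 0)) (hle (q0 1)) (hle (p0 0)) (hle (p0 1)) (by
      rw [← hone, ← Valuation.map_neg]; congr 1; ring)
  have e2 : wg p q = a * b * (algebraMap O K (p0 0) * algebraMap O K (q0 1)
      - algebraMap O K (p0 1) * algebraMap O K (q0 0)) := by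
    simp only [wg, hpa, hqb]; ring
  have e3 : max (v.valuation K (p 0)) (v.valuation K (p 1)) = v.valuation K a := by
    rw [hpa, hpa, map_mul, map_mul, ← mul_max, m1, mul_one]
  have e4 : max (v.valuation K (q 0)) (v.valuation K (q 1)) = v.valuation K b := by
    rw [hqb, hqb, map_mul, map_mul, ← mul_max, m2, mul_one]
  rw [e2, e3, e4, map_mul, map_mul, hone, mul_one]

theorem triple_count (T : Finset (HeightOneSpectrum (𝓞 K))) (P : Fin 3 → P1 K)
    (hP : Function.Injective P) (X : Finset (P1 K)) (hX : ∀ Q ∈ X, ∀ i, Q ≠ P i)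
    (hcop : ∀ v ∉ T, ∀ Q ∈ X, ∀ i, Cop (v.valuation (K := K)).valuationSubring (P i) Q) :
    X.card ≤ 3 * 7 ^ (4 * sCard K T) := by
  have hne : ∀ {A B : P1 K}, A ≠ B → wg A.rep B.rep ≠ 0 := fun hAB h =>
    hAB ((rep_rep _).eq_of_wg (rep_rep _) h)
  have h01 : wg (P 0).rep (P 1).rep ≠ 0 := hne (fun h => by simpa using hP h)
  have h12 : wg (P 1).rep (P 2).rep ≠ 0 := hne (fun h => by simpa using hP h)
  have h20 : wg (P 2).rep (P 0).rep ≠ 0 := hne (fun h => by simpa using hP h)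
  have hq : ∀ Q ∈ X, ∀ i, wg (P i).rep Q.rep ≠ 0 := fun Q hQ i => hne (hX Q hQ i).symm
  let x : P1 K → K := fun Q => - (wg (P 1).rep (P 2).rep * wg (P 0).rep Q.rep)
    / (wg (P 0).rep (P 1).rep * wg (P 2).rep Q.rep)
  have hy : ∀ Q ∈ X, 1 - x Q = - (wg (P 2).rep (P 0).rep * wg (P 1).rep Q.rep)
    / (wg (P 0).rep (P 1).rep * wg (P 2).rep Q.rep) := by
    intro Q hQ
    have := hq Q hQ 2
    simp only [x]
    field_simp
    simp only [wg]
    ring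
  have hxinj : Set.InjOn x X := by
    intro Q hQ Q' hQ' h
    have a := hq Q hQ 2
    have b := hq Q' hQ' 2
    simp only [x] at h
    rw [div_eq_div_iff (mul_ne_zero h01 a) (mul_ne_zero h01 b)] at h
    have h3 : (wg (P 1).rep (P 2).rep * wg (P 0).rep (P 1).rep * wg (P 2).rep (P 0).rep) *
        wg Q.rep Q'.rep = 0 := by
      simp only [wg] at h ⊢
      linear_combination h
    have h4 := (mul_eq_zero.1 h3).resolve_left (mul_ne_zero (mul_ne_zero h12 h01) h20)
    exact (rep_rep _).eq_of_wg (rep_rep _) h4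
  rw [← Finset.card_image_of_injOn hxinj]
  have hn : ∀ (v : HeightOneSpectrum (𝓞 K)) (Q : P1 K),
      max (v.valuation K (Q.rep 0)) (v.valuation K (Q.rep 1)) ≠ 0 := by
    intro v Q h
    have h1 : v.valuation K (Q.rep 0) ≤ 0 := h ▸ le_max_left _ _
    have h2 : v.valuation K (Q.rep 1) ≤ 0 := h ▸ le_max_right _ _
    rw [le_zero_iff, Valuation.zero_iff] at h1 h2
    apply Q.rep_nonzero
    funext i; fin_cases i
    · exact h1
    · exact h2
  have hval : ∀ v ∉ T, ∀ Q ∈ X, ∀ (A B : K) (i : Fin 3),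
      v.valuation K (- (A * wg (P i).rep Q.rep) / (B * wg (P 2).rep Q.rep)) =
      v.valuation K A * max (v.valuation K ((P i).rep 0)) (v.valuation K ((P i).rep 1)) /
        (v.valuation K B * max (v.valuation K ((P 2).rep 0)) (v.valuation K ((P 2).rep 1))) := by
    intro v hv Q hQ A B i
    rw [map_div₀, Valuation.map_neg, map_mul, map_mul,
      cop_val v (hcop v hv Q hQ i) (rep_rep _) (rep_rep _),
      cop_val v (hcop v hv Q hQ 2) (rep_rep _) (rep_rep _), ← mul_assoc, ← mul_assoc,
      mul_div_mul_right _ _ (hn v Q)]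
  apply SUnitBound.nf_count T
  · intro z hz
    obtain ⟨Q, hQ, rfl⟩ := Finset.mem_image.1 hz
    exact div_ne_zero (neg_ne_zero.2 (mul_ne_zero h12 (hq Q hQ 0))) (mul_ne_zero h01 (hq Q hQ 2))
  · intro z hz
    obtain ⟨Q, hQ, rfl⟩ := Finset.mem_image.1 hz
    rw [hy Q hQ]
    exact div_ne_zero (neg_ne_zero.2 (mul_ne_zero h20 (hq Q hQ 1))) (mul_ne_zero h01 (hq Q hQ 2))
  · intro v hv z hz z' hz'
    obtain ⟨Q, hQ, rfl⟩ := Finset.mem_image.1 hz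
    obtain ⟨Q', hQ', rfl⟩ := Finset.mem_image.1 hz'
    exact (hval v hv Q hQ _ _ 0).trans (hval v hv Q' hQ' _ _ 0).symm
  · intro v hv z hz z' hz'
    obtain ⟨Q, hQ, rfl⟩ := Finset.mem_image.1 hz
    obtain ⟨Q', hQ', rfl⟩ := Finset.mem_image.1 hz'
    rw [hy Q hQ, hy Q' hQ']
    exact (hval v hv Q hQ _ _ 1).trans (hval v hv Q' hQ' _ _ 1).symm

/-- the periodic point in phase with `Q` -/
lemma in_phase (φ : P1Map K d) (P : Fin 4 → P1 K) (hper : ∀ i, IsPeriodicPoint φ (P i))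
    (Q : P1 K) (hQ : IsTailPoint φ Q ∨ (IsPeriodicPoint φ Q ∧ InCriticalCycle φ Q)) :
    ∃ (M : ℕ) (R : P1 K), (∀ i, φ.toFun^[M] (P i) = P i) ∧ φ.toFun^[M] R = R ∧
      φ.toFun^[M] Q = R ∧ (∀ i, P i ≠ R → Q ≠ P i) ∧
      (Q ≠ R ∨ (Q = R ∧ ∃ k < M, IsCriticalPt φ (φ.toFun^[k] R))) := by
  choose n hn0 hn using hper
  have hPi : ∀ A, ∀ i, φ.toFun^[A * ∏ j, n j] (P i) = P i := by
    intro A i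
    have h1 : Function.IsPeriodicPt φ.toFun (n i) (P i) := hn i
    exact h1.trans_dvd ((Finset.dvd_prod_of_mem n (Finset.mem_univ i)).mul_left A)
  have hpos : 0 < ∏ j, n j := Finset.prod_pos fun j _ => hn0 j
  rcases hQ with ⟨⟨m, c, hc0, hc⟩, hnp⟩ | ⟨⟨c', hc'0, hc'⟩, C, hcr, ⟨c, hc0, hc⟩, l, hl⟩
  · set M := (c * (m + 1)) * ∏ j, n j with hM
    have hmM : m ≤ M := by
      rw [hM]
      calc m ≤ m + 1 := by omega
        _ ≤ c * (m + 1) := Nat.le_mul_of_pos_left _ hc0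
        _ ≤ _ := Nat.le_mul_of_pos_right _ hpos
    have hM0 : 0 < M := by rw [hM]; positivity
    have hcM : c ∣ M := by rw [hM, mul_assoc]; exact dvd_mul_right _ _
    have hR : φ.toFun^[M] (φ.toFun^[M] Q) = φ.toFun^[M] Q := by
      have e : φ.toFun^[M] Q = φ.toFun^[M - m] (φ.toFun^[m] Q) := by
        rw [← Function.iterate_add_apply]; congr 2; omega
      have h1 : Function.IsPeriodicPt φ.toFun c (φ.toFun^[m] Q) := hc
      have h2 := (h1.trans_dvd hcM).apply_iterate (M - m)
      rw [e]; exact h2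
    refine ⟨M, φ.toFun^[M] Q, hPi _, hR, rfl, ?_, Or.inl ?_⟩
    · intro i _ h
      exact hnp (h ▸ ⟨n i, hn0 i, hn i⟩)
    · intro h
      exact hnp ⟨M, hM0, h.symm⟩
  · set M := (c * (l + 2)) * ∏ j, n j with hM
    have hcM : c ∣ M := by rw [hM, mul_assoc]; exact dvd_mul_right _ _
    have h1 : Function.IsPeriodicPt φ.toFun c C := hc
    have hQ' : φ.toFun^[M] Q = Q := by
      rw [← hl]; exact (h1.trans_dvd hcM).apply_iterate l
    have hle : c * (l + 2) ≤ M := by rw [hM]; exact Nat.le_mul_of_pos_right _ hpos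
    have hlc : l + 1 ≤ c * (l + 1) := Nat.le_mul_of_pos_left _ hc0
    refine ⟨M, Q, hPi _, hQ', hQ', fun i h => h.symm, Or.inr ⟨rfl, c * (l + 1) - l, ?_, ?_⟩⟩
    · have : c * (l + 2) = c * (l + 1) + c := by ring
      omega
    · have e : φ.toFun^[c * (l + 1) - l] Q = C := by
        rw [← hl, ← Function.iterate_add_apply]
        have : c * (l + 1) - l + l = c * (l + 1) := by omega
        rw [this]
        exact h1.trans_dvd (dvd_mul_right _ _)
      rw [e]; exact hcr

end final

end TailBound


/-- **Theorem.** If `φ` has at least four `K`-rational periodic points, then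
`|Tail(φ,K)| + |Per₀(φ,K)| ≤ 12·7^{4|S|}`. -/
theorem tail_add_per0_bound_of_four_periodic
    {K : Type*} [Field K] [NumberField K]
    (T : Finset (HeightOneSpectrum (𝓞 K))) {d : ℕ} (hd : 2 ≤ d)
    (φ : P1Map K d) (hgr : GoodReductionOutside φ T)
    (P : Fin 4 → P1 K) (hinj : Function.Injective P)
    (hper : ∀ i, IsPeriodicPoint φ (P i)) :
    {Q : P1 K | IsTailPoint φ Q}.Finite ∧
      {Q : P1 K | IsPeriodicPoint φ Q ∧ InCriticalCycle φ Q}.Finite ∧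
      {Q : P1 K | IsTailPoint φ Q}.ncard +
        {Q : P1 K | IsPeriodicPoint φ Q ∧ InCriticalCycle φ Q}.ncard ≤
          12 * 7 ^ (4 * sCard K T) := by
  set A := {Q : P1 K | IsTailPoint φ Q} with hA
  set B := {Q : P1 K | IsPeriodicPoint φ Q ∧ InCriticalCycle φ Q} with hB
  have hdisj : Disjoint A B := by
    rw [Set.disjoint_left]
    intro Q h1 h2
    exact h1.2 h2.1
  have key : ∀ X : Finset (P1 K), (X : Set (P1 K)) ⊆ A ∪ B →
      X.card ≤ 12 * 7 ^ (4 * sCard K T) := by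
    intro X hX
    let good : Fin 4 → P1 K → Prop := fun j Q => ∀ i, i ≠ j → Q ≠ P i ∧
      ∀ v ∉ T, TailBound.Cop (v.valuation (K := K)).valuationSubring (P i) Q
    have hgood : ∀ Q ∈ X, ∃ j, good j Q := by
      intro Q hQ
      obtain ⟨M, R, hP, hR, hQR, hne, hor⟩ := TailBound.in_phase φ P hper Q (hX hQ)
      obtain ⟨j, hj⟩ : ∃ j, ∀ i, i ≠ j → P i ≠ R := by
        by_cases h : ∃ j, P j = R
        · obtain ⟨j, rfl⟩ := h
          exact ⟨j, fun i hi h => hi (hinj h)⟩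
        · push Not at h
          exact ⟨0, fun i _ => h i⟩
      refine ⟨j, fun i hi => ⟨hne i (hj i hi), fun v hv => ?_⟩⟩
      exact TailBound.good_dyn φ v (hgr v hv) (hP i) hR hQR (hj i hi) hor
    have hcov : X ⊆ Finset.univ.biUnion fun j => X.filter (good j) := by
      intro Q hQ
      obtain ⟨j, hj⟩ := hgood Q hQ
      exact Finset.mem_biUnion.2 ⟨j, Finset.mem_univ _, Finset.mem_filter.2 ⟨hQ, hj⟩⟩
    have hj : ∀ j, (X.filter (good j)).card ≤ 3 * 7 ^ (4 * sCard K T) := by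
      intro j
      refine TailBound.triple_count T (fun i => P (j.succAbove i))
        (hinj.comp Fin.succAbove_right_injective) _ ?_ ?_
      · intro Q hQ i
        exact ((Finset.mem_filter.1 hQ).2 _ (Fin.succAbove_ne j i)).1
      · intro v hv Q hQ i
        exact ((Finset.mem_filter.1 hQ).2 _ (Fin.succAbove_ne j i)).2 v hv
    calc X.card ≤ _ := Finset.card_le_card hcov
      _ ≤ ∑ j, (X.filter (good j)).card := Finset.card_biUnion_le
      _ ≤ ∑ _j : Fin 4, 3 * 7 ^ (4 * sCard K T) := Finset.sum_le_sum fun j _ => hj j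
      _ = 12 * 7 ^ (4 * sCard K T) := by simp; ring
  have hfin : (A ∪ B).Finite := by
    by_contra hinf
    obtain ⟨X, hX, hc⟩ := Set.Infinite.exists_subset_card_eq hinf (12 * 7 ^ (4 * sCard K T) + 1)
    have := key X hX
    omega
  have hfA : A.Finite := hfin.subset Set.subset_union_left
  have hfB : B.Finite := hfin.subset Set.subset_union_right
  refine ⟨hfA, hfB, ?_⟩
  rw [← Set.ncard_union_eq hdisj hfA hfB, Set.ncard_eq_toFinset_card _ hfin]
  exact key _ (by simp)
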